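/- Let Ω = (0,1)×(−1,1). Then A ∩ W^{1,1}(Ω;ℝ²) = {u ∈ W^{1,1}(Ω;ℝ²) : u(x) = Rx + θ(x₂)Re₁ + c for a.e. x ∈ Ω, with R ∈ SO(2), θ ∈ W^{1,1}(−1,1), c ∈ ℝ²} = {u ∈ W^{1,1}(Ω;ℝ²) : ∇u(x) = R(I + γ(x₂) e₁⊗e₂) for a.e. x ∈ Ω, with R ∈ SO(2) and γ ∈ L¹(−1,1)}. -/

import Mathlib

open MeasureTheory Set Filter Topology
open scoped ENNReal

noncomputable section

/-- We identify `ℝ²` with maps `Fin 2 → ℝ`; `x 0` is the `x₁` coordinate and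
`x 1` the `x₂` coordinate. -/
abbrev V2 := Fin 2 → ℝ

/-- `2 × 2` real matrices. -/
abbrev Mat2 := Matrix (Fin 2) (Fin 2) ℝ

/-- Proper rotations: `SO(2) = {R : R Rᵀ = 1, det R = 1}`. -/
def SO2 : Set Mat2 := {R | R * R.transpose = 1 ∧ R.det = 1}

def e1 : V2 := ![1, 0]
def e2 : V2 := ![0, 1]

/-- Euclidean norm on `ℝ²`. -/
def vnorm (v : V2) : ℝ := Real.sqrt (v 0 ^ 2 + v 1 ^ 2)

/-- Frobenius norm on `2 × 2` matrices. -/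
def mnorm (M : Mat2) : ℝ := Real.sqrt (∑ i, ∑ j, M i j ^ 2)

/-- Euclidean inner product on `ℝ²`. -/
def dot (v w : V2) : ℝ := ∑ i, v i * w i

/-- Tensor (outer) product `a ⊗ b = a bᵀ` of two vectors. -/
def outer (a b : V2) : Mat2 := Matrix.of fun i j => a i * b j

/-- Identification of `ℝ²` with the Euclidean space `EuclideanSpace ℝ (Fin 2)`. -/
def vToE (v : V2) : EuclideanSpace ℝ (Fin 2) := (EuclideanSpace.equiv (Fin 2) ℝ).symm v

/-- Identification of `2×2` matrices with `EuclideanSpace ℝ (Fin 2 × Fin 2)`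
(so that the induced norm is the Frobenius norm). -/
def mToE (M : Mat2) : EuclideanSpace ℝ (Fin 2 × Fin 2) :=
  (EuclideanSpace.equiv (Fin 2 × Fin 2) ℝ).symm fun p => M p.1 p.2

/-- A vector-valued function of one real variable has bounded variation on `s`
(with respect to the Euclidean norm). -/
def BVv (ψ : ℝ → V2) (s : Set ℝ) : Prop := BoundedVariationOn (fun t => vToE (ψ t)) s

/-- A matrix-valued function of one real variable has bounded variation on `s`
(with respect to the Frobenius norm). -/
def BVm (R : ℝ → Mat2) (s : Set ℝ) : Prop := BoundedVariationOn (fun t => mToE (R t)) s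

/-- Componentwise (a.e. pointwise) derivative of a vector-valued function of one variable.
For a one-dimensional `BV` function, the classical derivative exists a.e. and coincides with
the density of the absolutely continuous part of its distributional derivative
(the approximate derivative). -/
def vecDeriv (ψ : ℝ → V2) (t : ℝ) : V2 := fun i => deriv (fun s => ψ s i) t

/-- Componentwise derivative of a matrix-valued function of one variable. -/
def mDeriv (R : ℝ → Mat2) (t : ℝ) : Mat2 := Matrix.of fun i j => deriv (fun s => R s i j) t

/-- The rigid layers `ε Y_rig = {x : Int.fract (x₂/ε) ∈ [λ, 1)}` (1-periodic extension of
`[0,1) × [λ,1)`, scaled by `ε`). -/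
def rigid2 (lam ε : ℝ) : Set V2 := {x | lam ≤ Int.fract (x 1 / ε)}

/-- The one-dimensional rigid layers `ε I_rig`, where `I_rig` is the 1-periodic extension
of `[λ, 1)`. -/
def rigid1 (lam ε : ℝ) : Set ℝ := {t | lam ≤ Int.fract (t / ε)}

/-- `a_Ω = inf_{x ∈ Ω} x₂`. -/
def aOm (Ω : Set V2) : ℝ := sInf ((fun x : V2 => x 1) '' Ω)

/-- `b_Ω = sup_{x ∈ Ω} x₂`. -/
def bOm (Ω : Set V2) : ℝ := sSup ((fun x : V2 => x 1) '' Ω)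

/-- `Ω` is `x₁`-connected: every horizontal slice is a (possibly empty) interval. -/
def X1Connected (Ω : Set V2) : Prop := ∀ t : ℝ, OrdConnected {s : ℝ | ![s, t] ∈ Ω}

/-- A (nonempty) bounded Lipschitz domain: near every boundary point, after a rotation,
`Ω` is the region above the graph of a Lipschitz function. -/
def IsLipschitzDomain (Ω : Set V2) : Prop :=
  IsOpen Ω ∧ Ω.Nonempty ∧ Bornology.IsBounded Ω ∧
    ∀ x ∈ frontier Ω, ∃ Q ∈ SO2, ∃ L : NNReal, ∃ f : ℝ → ℝ, ∃ r : ℝ, 0 < r ∧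
      LipschitzWith L f ∧ ∀ y ∈ Metric.ball x r, (y ∈ Ω ↔ f (Q.mulVec y 0) < Q.mulVec y 1)

/-- Partial derivative `∂_j φ` of a scalar test function. -/
def pd (j : Fin 2) (φ : V2 → ℝ) (x : V2) : ℝ := fderiv ℝ φ x (Pi.single j 1)

/-- Componentwise integrability of a matrix-valued map. -/
def IntegrableOnM (g : V2 → Mat2) (Ω : Set V2) : Prop :=
  ∀ i j, IntegrableOn (fun x => g x i j) Ω volume

/-- `u ∈ W^{1,1}(Ω;ℝ²)` with weak gradient `gu`, expressed through integration by parts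
against smooth compactly supported test functions. -/
structure IsSobolev11On (Ω : Set V2) (u : V2 → V2) (gu : V2 → Mat2) : Prop where
  int_u : IntegrableOn u Ω volume
  int_gu : IntegrableOnM gu Ω
  ibp : ∀ φ : V2 → ℝ, ContDiff ℝ (⊤ : ℕ∞) φ → HasCompactSupport φ → tsupport φ ⊆ Ω →
    ∀ i j, ∫ x in Ω, u x i * pd j φ x = - ∫ x in Ω, φ x * gu x i j

/-- `u ∈ BV(Ω;ℝ²)`, with distributional derivative `Du = gu · L² + gs · σ`.
Here `gu` is the approximate differential (density of the absolutely continuous part),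
`σ = |D^s u|` is the total variation measure of the singular part (a finite measure,
concentrated on `Ω` and singular with respect to Lebesgue measure), and `gs` is the
polar density of the singular part, of unit Frobenius norm `σ`-a.e. -/
structure HasBVDerivOn (Ω : Set V2) (u : V2 → V2) (gu : V2 → Mat2)
    (σ : Measure V2) (gs : V2 → Mat2) : Prop where
  int_u : IntegrableOn u Ω volume
  int_gu : IntegrableOnM gu Ω
  fin : σ Set.univ ≠ ⊤
  conc : σ Ωᶜ = 0
  perp : σ ⟂ₘ (volume : Measure V2)
  meas_gs : ∀ i j, AEMeasurable (fun x => gs x i j) σ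
  unit : ∀ᵐ x ∂σ, mnorm (gs x) = 1
  ibp : ∀ φ : V2 → ℝ, ContDiff ℝ (⊤ : ℕ∞) φ → HasCompactSupport φ → tsupport φ ⊆ Ω →
    ∀ i j, ∫ x in Ω, u x i * pd j φ x
        = (- ∫ x in Ω, φ x * gu x i j) - ∫ x, φ x * gs x i j ∂σ

/-- `L¹(Ω;ℝ²)` convergence of a sequence. -/
def L1ConvOn (Ω : Set V2) (un : ℕ → V2 → V2) (u : V2 → V2) : Prop :=
  Tendsto (fun n => ∫ x in Ω, vnorm (un n x - u x)) atTop (𝓝 0)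

/-- Weak* convergence of the measures `gn n · L²∟Ω` to `gu · L²∟Ω + gs · σ`
in `M(Ω; ℝ^{2×2})`, tested against continuous functions compactly supported in `Ω`. -/
def MeasConv (Ω : Set V2) (gn : ℕ → V2 → Mat2) (gu : V2 → Mat2)
    (σ : Measure V2) (gs : V2 → Mat2) : Prop :=
  ∀ φ : V2 → ℝ, Continuous φ → HasCompactSupport φ → tsupport φ ⊆ Ω → ∀ i j,
    Tendsto (fun n => ∫ x in Ω, φ x * gn n x i j) atTop
      (𝓝 ((∫ x in Ω, φ x * gu x i j) + ∫ x, φ x * gs x i j ∂σ))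

/-- Weak* convergence in `BV(Ω;ℝ²)` of a sequence of `W^{1,1}` maps to a `BV` limit:
`L¹` convergence together with weak* convergence of the derivative measures. -/
def WeakStarToBV (Ω : Set V2) (un : ℕ → V2 → V2) (u : V2 → V2) : Prop :=
  ∃ gu σ gs, HasBVDerivOn Ω u gu σ gs ∧ L1ConvOn Ω un u ∧
    ∀ gn : ℕ → V2 → Mat2, (∀ n, IsSobolev11On Ω (un n) (gn n)) → MeasConv Ω gn gu σ gs

/-- `u ∈ A_ε`, witnessed by the data `R ∈ L^∞(Ω;SO(2))` and `γ ∈ L¹(Ω)`: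
`u ∈ W^{1,1}(Ω;ℝ²)` with `∇u = R (I + γ e₁⊗e₂)` a.e. and `γ = 0` a.e. on `εY_rig ∩ Ω`. -/
structure MemAeps (Ω : Set V2) (lam ε : ℝ) (u : V2 → V2)
    (R : V2 → Mat2) (γ : V2 → ℝ) : Prop where
  so2 : ∀ᵐ x ∂(volume.restrict Ω), R x ∈ SO2
  int_γ : IntegrableOn γ Ω volume
  sob : IsSobolev11On Ω u fun x => R x * (1 + γ x • outer e1 e2)
  rig : ∀ᵐ x ∂(volume.restrict (Ω ∩ rigid2 lam ε)), γ x = 0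

/-- The elastoplastic energy `E_ε(u) = ∫_Ω |γ| dx` for `u ∈ A_ε`, `∞` otherwise,
as an `ℝ≥0∞`-valued functional (the decomposition data is essentially unique). -/
def Eeps (Ω : Set V2) (lam ε : ℝ) (u : V2 → V2) : ℝ≥0∞ :=
  sInf {c | ∃ R γ, MemAeps Ω lam ε u R γ ∧ c = ∫⁻ x in Ω, ENNReal.ofReal |γ x|}

/-- `u ∈ A` relative to the vertical interval `(a, b)`:
`u ∈ BV(Ω;ℝ²)` with `u(x) = R(x₂)x + ψ(x₂)` a.e., `R ∈ BV(a,b;SO(2))`,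
`ψ ∈ BV(a,b;ℝ²)` and `det ∇u = 1` a.e. in `Ω`. -/
def memAOn (Ω : Set V2) (a b : ℝ) (u : V2 → V2) : Prop :=
  ∃ gu σ gs, HasBVDerivOn Ω u gu σ gs ∧
    (∃ R : ℝ → Mat2, ∃ ψ : ℝ → V2, (∀ t ∈ Ioo a b, R t ∈ SO2) ∧
      BVm R (Ioo a b) ∧ BVv ψ (Ioo a b) ∧
      ∀ᵐ x ∂(volume.restrict Ω), u x = (R (x 1)).mulVec x + ψ (x 1)) ∧
    ∀ᵐ x ∂(volume.restrict Ω), (gu x).det = 1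

/-- `u ∈ A`. -/
def memA (Ω : Set V2) (u : V2 → V2) : Prop := memAOn Ω (aOm Ω) (bOm Ω) u

/-- `u ∈ A∥` relative to the vertical interval `(a,b)`:
`u(x) = Rx + ϑ(x₂) R e₁ + c` a.e. with a constant rotation `R ∈ SO(2)`,
`ϑ ∈ BV(a,b)` and `c ∈ ℝ²`. -/
def memAparOn (Ω : Set V2) (a b : ℝ) (u : V2 → V2) : Prop :=
  ∃ R ∈ SO2, ∃ ϑ : ℝ → ℝ, ∃ c : V2, BoundedVariationOn ϑ (Ioo a b) ∧
    ∀ᵐ x ∂(volume.restrict Ω), u x = R.mulVec x + ϑ (x 1) • R.mulVec e1 + c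

/-- `u ∈ A∥`. -/
def memApar (Ω : Set V2) (u : V2 → V2) : Prop := memAparOn Ω (aOm Ω) (bOm Ω) u

/-- The limit energy `E(u) = ∫_Ω |ψ'·Re₁| dx + |D^s u|(Ω)` for `u ∈ A`, `∞` otherwise. -/
def Efun (Ω : Set V2) (u : V2 → V2) : ℝ≥0∞ :=
  sInf {c | ∃ gu σ gs, HasBVDerivOn Ω u gu σ gs ∧
    ∃ R : ℝ → Mat2, ∃ ψ : ℝ → V2,
      (∀ t ∈ Ioo (aOm Ω) (bOm Ω), R t ∈ SO2) ∧ BVm R (Ioo (aOm Ω) (bOm Ω)) ∧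
      BVv ψ (Ioo (aOm Ω) (bOm Ω)) ∧
      (∀ᵐ x ∂(volume.restrict Ω), u x = (R (x 1)).mulVec x + ψ (x 1)) ∧
      (∀ᵐ x ∂(volume.restrict Ω), (gu x).det = 1) ∧
      c = (∫⁻ x in Ω, ENNReal.ofReal |dot (vecDeriv ψ (x 1)) ((R (x 1)).mulVec e1)|)
          + σ Set.univ}

/-- The limit energy on `A∥`: `E(u) = ∫_Ω |ϑ'(x₂)| dx + |D^s u|(Ω)` for `u ∈ A∥`,
`∞` otherwise. -/
def EparFun (Ω : Set V2) (u : V2 → V2) : ℝ≥0∞ :=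
  sInf {c | ∃ gu σ gs, HasBVDerivOn Ω u gu σ gs ∧
    ∃ R ∈ SO2, ∃ ϑ : ℝ → ℝ, ∃ c0 : V2, BoundedVariationOn ϑ (Ioo (aOm Ω) (bOm Ω)) ∧
      (∀ᵐ x ∂(volume.restrict Ω), u x = R.mulVec x + ϑ (x 1) • R.mulVec e1 + c0) ∧
      c = (∫⁻ x in Ω, ENNReal.ofReal |deriv ϑ (x 1)|) + σ Set.univ}

/-- The regularized limit energy `E^δ(u) = ∫_Ω |ϑ'| dx + |D^s u|(Ω) + δ|Ω|` on `A∥`,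
`∞` otherwise. -/
def EDelta (Ω : Set V2) (δ : ℝ) (u : V2 → V2) : ℝ≥0∞ :=
  EparFun Ω u + ENNReal.ofReal δ * volume Ω

/-- `‖v‖_{W^{1,p}(Ω;ℝ²)}^p = ∫_Ω |v|^p + ∫_Ω |Dv|^p` for a map `v` with weak Jacobian `G`. -/
def Wp1 (p : ℝ) (Ω : Set V2) (v : V2 → V2) (G : V2 → Mat2) : ℝ≥0∞ :=
  (∫⁻ x in Ω, ENNReal.ofReal (vnorm (v x) ^ p)) + ∫⁻ x in Ω, ENNReal.ofReal (mnorm (G x) ^ p)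

/-- The regularized energy
`E^δ_ε(u) = ∫_Ω |γ| dx + δ ‖∂₁ u‖_{W^{1,p}(Ω;ℝ²)}^p` for `u ∈ A_ε` with
`∂₁u = R e₁ ∈ W^{1,p}(Ω;ℝ²)`, and `∞` otherwise. -/
def EepsDelta (Ω : Set V2) (lam ε δ p : ℝ) (u : V2 → V2) : ℝ≥0∞ :=
  sInf {c | ∃ R γ, MemAeps Ω lam ε u R γ ∧
    ∃ G : V2 → Mat2, IsSobolev11On Ω (fun x => (R x).mulVec e1) G ∧
      c = (∫⁻ x in Ω, ENNReal.ofReal |γ x|) +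
          ENNReal.ofReal δ * Wp1 p Ω (fun x => (R x).mulVec e1) G}

/-- `x` is an approximate jump point of `u`, with one-sided approximate limits `a ≠ b`
relative to a unit normal `ν`. -/
def JumpPt (u : V2 → V2) (x : V2) : Prop :=
  ∃ a b ν : V2, a ≠ b ∧ vnorm ν = 1 ∧
    Tendsto (fun r : ℝ =>
        (∫⁻ z in {z | z ∈ Metric.ball x r ∧ 0 < dot (z - x) ν},
            ENNReal.ofReal (vnorm (u z - a))) / volume (Metric.ball x r))
      (𝓝[>] 0) (𝓝 0) ∧
    Tendsto (fun r : ℝ =>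
        (∫⁻ z in {z | z ∈ Metric.ball x r ∧ dot (z - x) ν < 0},
            ENNReal.ofReal (vnorm (u z - b))) / volume (Metric.ball x r))
      (𝓝[>] 0) (𝓝 0)

/-- The jump set `J_u` of `u` in `Ω`. -/
def jumpSet (Ω : Set V2) (u : V2 → V2) : Set V2 := {x ∈ Ω | JumpPt u x}

/-- `u ∈ SBV_∞(Ω;ℝ²)`: `u ∈ BV` with singular part concentrated on the jump set
(no Cantor part), `∇u ∈ L^∞(Ω;ℝ^{2×2})` and `H¹(J_u) < ∞`. -/
def memSBVinf (Ω : Set V2) (u : V2 → V2) : Prop :=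
  ∃ gu σ gs, HasBVDerivOn Ω u gu σ gs ∧
    σ {x | ¬ JumpPt u x} = 0 ∧
    (∃ M : ℝ, ∀ᵐ x ∂(volume.restrict Ω), mnorm (gu x) ≤ M) ∧
    Measure.hausdorffMeasure (1 : ℝ) (jumpSet Ω u) ≠ ⊤

/-- Piecewise constant functions on `(a,b)` with finitely many jumps
(the class `PC(a,b)`). -/
def PCOn {α : Type*} (a b : ℝ) (f : ℝ → α) : Prop :=
  ∃ S : Finset ℝ, ∀ s₁ ∈ Ioo a b, ∀ s₂ ∈ Ioo a b, s₁ ≤ s₂ →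
    (∀ r ∈ S, r ∉ Icc s₁ s₂) → f s₁ = f s₂

/-- Piecewise Lipschitz functions on `(a,b)` with finitely many jump points:
the class `SBV_∞(a,b;ℝ²)` of one-dimensional special functions of bounded variation
with bounded derivative and finitely many jumps. -/
def PLipOn (a b : ℝ) (f : ℝ → V2) : Prop :=
  ∃ S : Finset ℝ, ∃ L : ℝ, 0 ≤ L ∧ ∀ s₁ ∈ Ioo a b, ∀ s₂ ∈ Ioo a b, s₁ ≤ s₂ →
    (∀ r ∈ S, r ∉ Icc s₁ s₂) → vnorm (f s₂ - f s₁) ≤ L * (s₂ - s₁)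

/-- The rectangle `Ω = (0,1) × (−1,1)`. -/
def Rect : Set V2 := {x | x 0 ∈ Ioo (0:ℝ) 1 ∧ x 1 ∈ Ioo (-1:ℝ) 1}

/-- `f ∈ W^{1,1}(a,b)`: `f` has an integrable weak derivative on `(a,b)`
(absolutely continuous representative). -/
def IsW11On (f : ℝ → ℝ) (a b : ℝ) : Prop :=
  ∃ g : ℝ → ℝ, IntegrableOn g (Ioo a b) volume ∧
    ∀ s ∈ Ioo a b, ∀ t ∈ Ioo a b, f t - f s = ∫ r in s..t, g r

/-! A map `u(x) = R(x₂)x + ψ(x₂)` has the form `x₁ f(x₂) + q(x₂)`, where `f` is the first column of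
`R`. Testing a weak gradient of `u` against products `η(x₁)ζ(x₂)` with `∫ η = 0` and with `∫ η ≠ 0`
shows that `f` and `q` are themselves `W^{1,1}`. Then `det ∇u = 1` becomes
`(f × f')(x₂) x₁ + (f × q')(x₂) = 1`, which forces `f × f' = 0`. Since `|f| = 1` also gives
`f ⬝ f' = 0`, the unit vector `f`, and with it the rotation, is constant. A matrix of determinant
one whose first column is that of a rotation `S` is `S(I + γ e₁⊗e₂)`, and integrating `γ` in `x₂`
yields `θ`. -/

section TestFunctions

variable {E F : Type*} [NormedAddCommGroup E] [NormedSpace ℝ E] [NormedAddCommGroup F]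
  [NormedSpace ℝ F] {U : Set E} {V : Set F} {φ ψ : E → ℝ}

/-- The class `C_c^∞(U)` of real test functions, as a predicate on functions so that it matches
the integration by parts clauses of `IsSobolev11On` and `HasBVDerivOn` word for word. -/
structure IsTestFunctionOn (φ : E → ℝ) (U : Set E) : Prop where
  contDiff : ContDiff ℝ (⊤ : ℕ∞) φ
  hasCompactSupport : HasCompactSupport φ
  tsupport_subset : tsupport φ ⊆ U

namespace IsTestFunctionOn

theorem continuous (hφ : IsTestFunctionOn φ U) : Continuous φ := hφ.contDiff.continuous

theorem differentiable (hφ : IsTestFunctionOn φ U) : Differentiable ℝ φ :=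
  hφ.contDiff.differentiable (by simp)

theorem eq_zero_of_notMem (hφ : IsTestFunctionOn φ U) {x : E} (hx : x ∉ U) : φ x = 0 :=
  image_eq_zero_of_notMem_tsupport fun h => hx (hφ.tsupport_subset h)

theorem fderiv_apply (hφ : IsTestFunctionOn φ U) (v : E) :
    IsTestFunctionOn (fun x => fderiv ℝ φ x v) U where
  contDiff := (hφ.contDiff.fderiv_right (m := (⊤ : ℕ∞)) (by simp)).clm_apply contDiff_const
  hasCompactSupport := hφ.hasCompactSupport.fderiv_apply ℝ v
  tsupport_subset := (tsupport_fderiv_apply_subset ℝ v).trans hφ.tsupport_subset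

theorem sub_const_mul (hφ : IsTestFunctionOn φ U) (hψ : IsTestFunctionOn ψ U) (c : ℝ) :
    IsTestFunctionOn (fun x => φ x - c * ψ x) U where
  contDiff := hφ.contDiff.sub (contDiff_const.mul hψ.contDiff)
  hasCompactSupport := hφ.hasCompactSupport.sub (hψ.hasCompactSupport.mul_left (f := fun _ => c))
  tsupport_subset := by
    refine (tsupport_sub _ _).trans (union_subset hφ.tsupport_subset ?_)
    exact (tsupport_mul_subset_right (f := fun _ => c)).trans hψ.tsupport_subset

theorem prod {α : E → ℝ} {β : F → ℝ} (hα : IsTestFunctionOn α U) (hβ : IsTestFunctionOn β V) :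
    IsTestFunctionOn (fun z : E × F => α z.1 * β z.2) (U ×ˢ V) := by
  have hsupp : tsupport (fun z : E × F => α z.1 * β z.2) ⊆ tsupport α ×ˢ tsupport β :=
    closure_minimal (fun z hz => ⟨subset_tsupport _ (left_ne_zero_of_mul hz),
      subset_tsupport _ (right_ne_zero_of_mul hz)⟩) (isClosed_closure.prod isClosed_closure)
  exact ⟨(hα.contDiff.comp contDiff_fst).mul (hβ.contDiff.comp contDiff_snd),
    (hα.hasCompactSupport.prod hβ.hasCompactSupport).of_isClosed_subset isClosed_closure hsupp,
    hsupp.trans (prod_mono hα.tsupport_subset hβ.tsupport_subset)⟩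

theorem slice {φ : E × F → ℝ} (hφ : IsTestFunctionOn φ (U ×ˢ V)) (x : E) :
    IsTestFunctionOn (fun y => φ (x, y)) V := by
  have hsupp : tsupport (fun y => φ (x, y)) ⊆ Prod.mk x ⁻¹' tsupport φ :=
    closure_minimal (fun y hy => subset_tsupport φ hy)
      (isClosed_closure.preimage (by fun_prop))
  refine ⟨hφ.contDiff.comp (contDiff_const.prodMk contDiff_id), ?_, fun y hy =>
    (hφ.tsupport_subset (hsupp hy)).2⟩
  refine (hφ.hasCompactSupport.image continuous_snd).of_isClosed_subset isClosed_closure ?_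
  exact fun y hy => ⟨(x, y), hsupp hy, rfl⟩

theorem comp_continuousLinearEquiv {φ : F → ℝ} (hφ : IsTestFunctionOn φ V) (e : E ≃L[ℝ] F) :
    IsTestFunctionOn (φ ∘ e) (e ⁻¹' V) where
  contDiff := hφ.contDiff.comp e.contDiff
  hasCompactSupport := hφ.hasCompactSupport.comp_homeomorph e.toHomeomorph
  tsupport_subset := by
    rw [show φ ∘ e = φ ∘ e.toHomeomorph from rfl, tsupport_comp_eq_preimage]
    exact preimage_mono hφ.tsupport_subset

variable [MeasurableSpace E] {f : E → ℝ} {μ : Measure E}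

theorem setIntegral_mul (hφ : IsTestFunctionOn φ U) :
    ∫ x in U, φ x * f x ∂μ = ∫ x, φ x * f x ∂μ :=
  setIntegral_eq_integral_of_forall_compl_eq_zero fun x hx => by
    rw [hφ.eq_zero_of_notMem hx, zero_mul]

variable [OpensMeasurableSpace E]

theorem integrable_mul (hφ : IsTestFunctionOn φ U) (hf : Integrable f μ) :
    Integrable (fun x => φ x * f x) μ := by
  obtain ⟨C, hC⟩ := hφ.continuous.bounded_above_of_compact_support hφ.hasCompactSupport
  exact hf.bdd_mul hφ.continuous.aestronglyMeasurable (Eventually.of_forall hC)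

theorem integrable_mul' (hφ : IsTestFunctionOn φ U) (hf : Integrable f μ) :
    Integrable (fun x => f x * φ x) μ := by
  simpa only [mul_comm] using hφ.integrable_mul hf

theorem integrable [IsFiniteMeasureOnCompacts μ] (hφ : IsTestFunctionOn φ U) : Integrable φ μ :=
  hφ.continuous.integrable_of_hasCompactSupport hφ.hasCompactSupport

end IsTestFunctionOn

section FundamentalLemma

variable [FiniteDimensional ℝ E] [MeasurableSpace E] [BorelSpace E] {μ σ : Measure E}
  {h k : E → ℝ}

theorem exists_isTestFunctionOn_integral_eq_one (μ : Measure E) [IsLocallyFiniteMeasure μ]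
    [μ.IsOpenPosMeasure] (hU : IsOpen U) (hne : U.Nonempty) :
    ∃ φ, IsTestFunctionOn φ U ∧ ∫ x, φ x ∂μ = 1 := by
  obtain ⟨x, hx⟩ := hne
  obtain ⟨r, hr, hrU⟩ := Metric.nhds_basis_closedBall.mem_iff.1 (hU.mem_nhds hx)
  let bump : ContDiffBump x := ⟨r / 2, r, half_pos hr, half_lt_self hr⟩
  refine ⟨bump.normed μ, ⟨bump.contDiff_normed, bump.hasCompactSupport_normed, ?_⟩,
    bump.integral_normed⟩
  rwa [bump.tsupport_normed_eq]

theorem ae_eq_zero_of_forall_setIntegral_testFunction_mul_eq_zero (hU : IsOpen U)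
    (hh : IntegrableOn h U μ)
    (hφ : ∀ φ, IsTestFunctionOn φ U → ∫ x in U, φ x * h x ∂μ = 0) :
    ∀ᵐ x ∂μ.restrict U, h x = 0 := by
  rw [ae_restrict_iff' hU.measurableSet]
  refine hU.ae_eq_zero_of_integral_contDiff_smul_eq_zero hh.locallyIntegrableOn
    fun φ h₁ h₂ h₃ => ?_
  have htest : IsTestFunctionOn φ U := ⟨h₁, h₂, h₃⟩
  simpa only [smul_eq_mul, htest.setIntegral_mul] using hφ φ htest

-- The function equal to `h` off a null set carrying `σ` and to `-k` on it is orthogonal to all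
-- test functions with respect to `μ + σ`.
theorem ae_eq_zero_of_forall_setIntegral_eq_integral_of_mutuallySingular (hU : IsOpen U)
    (hh : IntegrableOn h U μ) (hk : Integrable k σ) (hσ : σ ⟂ₘ μ)
    (hφ : ∀ φ, IsTestFunctionOn φ U → ∫ x in U, φ x * h x ∂μ = ∫ x, φ x * k x ∂σ) :
    ∀ᵐ x ∂μ.restrict U, h x = 0 := by
  obtain ⟨N, -, hσN, hμN⟩ := hσ
  classical
  let F : E → ℝ := N.piecewise h (-k)
  have hFμ : h =ᵐ[μ.restrict U] F := by
    filter_upwards [ae_restrict_of_ae (s := U) (compl_mem_ae_iff.2 hμN)] with x hx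
    exact (N.piecewise_eq_of_mem _ _ (not_not.1 hx)).symm
  have hFσ : -k =ᵐ[σ] F := by
    filter_upwards [compl_mem_ae_iff.2 hσN] with x hx
    exact (N.piecewise_eq_of_notMem _ _ hx).symm
  have hFμ_int : Integrable F (μ.restrict U) := Integrable.congr hh hFμ
  have hFσ_int : Integrable F σ := hk.neg.congr hFσ
  have hF_zero := ae_eq_zero_of_forall_setIntegral_testFunction_mul_eq_zero hU
    (hFμ_int.add_measure hFσ_int).integrableOn fun φ htest => by
      calc ∫ x in U, φ x * F x ∂(μ.restrict U + σ)
          = ∫ x in U, φ x * F x ∂μ + ∫ x, φ x * F x ∂σ := by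
            rw [htest.setIntegral_mul, integral_add_measure (htest.integrable_mul hFμ_int)
              (htest.integrable_mul hFσ_int)]
        _ = ∫ x in U, φ x * h x ∂μ + ∫ x, φ x * (-k) x ∂σ := by
            congr 1
            · exact integral_congr_ae (hFμ.mono fun x hx => by simp only [hx])
            · exact integral_congr_ae (hFσ.mono fun x hx => by simp only [hx])
        _ = 0 := by simp [hφ φ htest, integral_neg]
  rw [Measure.restrict_add, Measure.restrict_restrict_of_subset subset_rfl,
    ae_add_measure_iff] at hF_zero
  exact (hFμ.and hF_zero.1).mono fun x hx => hx.1.trans hx.2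

end FundamentalLemma

end TestFunctions

section WeakLineDeriv

variable {E F : Type*} [NormedAddCommGroup E] [NormedSpace ℝ E] [MeasureSpace E]
  [NormedAddCommGroup F] [NormedSpace ℝ F] [MeasureSpace F] [BorelSpace F]
  {f f' f₁ f₁' f₂ f₂' : E → ℝ} {U : Set E} {v : E}

/-- `f ∈ L¹(U)` has the weak directional derivative `f' ∈ L¹(U)` along `v`. On the real line the
direction `v = 1` gives the weak derivative, on a product `(v, 0)` and `(0, v)` give the partial
ones. -/
structure HasWeakLineDerivOn (f f' : E → ℝ) (U : Set E) (v : E) : Prop where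
  integrableOn : IntegrableOn f U
  integrableOn_deriv : IntegrableOn f' U
  integral_mul_fderiv : ∀ φ, IsTestFunctionOn φ U →
    ∫ x in U, f x * fderiv ℝ φ x v = -∫ x in U, φ x * f' x

namespace HasWeakLineDerivOn

theorem congr_ae (h : HasWeakLineDerivOn f₁ f₁' U v) (hf : f₁ =ᵐ[volume.restrict U] f₂)
    (hf' : f₁' =ᵐ[volume.restrict U] f₂') : HasWeakLineDerivOn f₂ f₂' U v where
  integrableOn := Integrable.congr h.integrableOn hf
  integrableOn_deriv := Integrable.congr h.integrableOn_deriv hf'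
  integral_mul_fderiv φ hφ := by
    rw [← integral_congr_ae (hf.mono fun x hx => congrArg (· * fderiv ℝ φ x v) hx),
      ← integral_congr_ae (hf'.mono fun x hx => congrArg (φ x * ·) hx),
      h.integral_mul_fderiv φ hφ]

theorem const_mul (h : HasWeakLineDerivOn f f' U v) (c : ℝ) :
    HasWeakLineDerivOn (fun x => c * f x) (fun x => c * f' x) U v where
  integrableOn := Integrable.const_mul h.integrableOn c
  integrableOn_deriv := Integrable.const_mul h.integrableOn_deriv c
  integral_mul_fderiv φ hφ := by
    simp_rw [mul_assoc, mul_left_comm _ c, integral_const_mul, h.integral_mul_fderiv φ hφ, mul_neg]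

theorem comp_continuousLinearEquiv {f f' : F → ℝ} {V : Set F} (e : E ≃L[ℝ] F)
    [BorelSpace E] (he : MeasurePreserving e) (h : HasWeakLineDerivOn f f' V (e v)) :
    HasWeakLineDerivOn (f ∘ e) (f' ∘ e) (e ⁻¹' V) v where
  integrableOn :=
    (he.integrableOn_comp_preimage e.toHomeomorph.measurableEmbedding).2 h.integrableOn
  integrableOn_deriv :=
    (he.integrableOn_comp_preimage e.toHomeomorph.measurableEmbedding).2 h.integrableOn_deriv
  integral_mul_fderiv φ hφ := by
    have hφe : IsTestFunctionOn (φ ∘ e.symm) V := by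
      simpa [← preimage_comp] using hφ.comp_continuousLinearEquiv e.symm
    have hpre (g : F → ℝ) : ∫ x in e ⁻¹' V, g (e x) = ∫ y in V, g y :=
      he.setIntegral_preimage_emb e.toHomeomorph.measurableEmbedding g V
    have hfderiv (x : E) : fderiv ℝ φ x v = fderiv ℝ (φ ∘ e.symm) (e x) (e v) := by
      simp [e.symm.comp_right_fderiv]
    calc ∫ x in e ⁻¹' V, (f ∘ e) x * fderiv ℝ φ x v
        = ∫ y in V, f y * fderiv ℝ (φ ∘ e.symm) y (e v) := by
          simp_rw [hfderiv, ← hpre, Function.comp_apply]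
      _ = -∫ y in V, (φ ∘ e.symm) y * f' y := h.integral_mul_fderiv _ hφe
      _ = -∫ x in e ⁻¹' V, φ x * (f' ∘ e) x := by simp [← hpre]

variable [BorelSpace E]

theorem add (h₁ : HasWeakLineDerivOn f₁ f₁' U v) (h₂ : HasWeakLineDerivOn f₂ f₂' U v) :
    HasWeakLineDerivOn (fun x => f₁ x + f₂ x) (fun x => f₁' x + f₂' x) U v where
  integrableOn := Integrable.add h₁.integrableOn h₂.integrableOn
  integrableOn_deriv := Integrable.add h₁.integrableOn_deriv h₂.integrableOn_deriv
  integral_mul_fderiv φ hφ := by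
    have hφ' := hφ.fderiv_apply v
    simp_rw [add_mul, mul_add]
    rw [integral_add (hφ'.integrable_mul' h₁.integrableOn) (hφ'.integrable_mul' h₂.integrableOn),
      integral_add (hφ.integrable_mul h₁.integrableOn_deriv)
        (hφ.integrable_mul h₂.integrableOn_deriv),
      h₁.integral_mul_fderiv φ hφ, h₂.integral_mul_fderiv φ hφ, neg_add]

theorem sub (h₁ : HasWeakLineDerivOn f₁ f₁' U v) (h₂ : HasWeakLineDerivOn f₂ f₂' U v) :
    HasWeakLineDerivOn (fun x => f₁ x - f₂ x) (fun x => f₁' x - f₂' x) U v := by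
  simpa only [neg_one_mul, ← sub_eq_add_neg] using h₁.add (h₂.const_mul (-1))

theorem ae_unique [FiniteDimensional ℝ E] (hU : IsOpen U) (h₁ : HasWeakLineDerivOn f f₁ U v)
    (h₂ : HasWeakLineDerivOn f f₂ U v) : f₁ =ᵐ[volume.restrict U] f₂ := by
  refine (ae_eq_zero_of_forall_setIntegral_testFunction_mul_eq_zero hU
    (h₁.integrableOn_deriv.sub h₂.integrableOn_deriv) fun φ hφ => ?_).mono fun x hx =>
      sub_eq_zero.1 hx
  simp_rw [Pi.sub_apply, mul_sub]
  rw [integral_sub (hφ.integrable_mul h₁.integrableOn_deriv)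
    (hφ.integrable_mul h₂.integrableOn_deriv), sub_eq_zero, ← neg_inj,
    ← h₁.integral_mul_fderiv φ hφ, ← h₂.integral_mul_fderiv φ hφ]

end HasWeakLineDerivOn

end WeakLineDeriv

section Line

variable {a b : ℝ} {f f' g : ℝ → ℝ}

theorem exists_subset_Icc_of_isCompact_of_subset_Ioo {K : Set ℝ} (hK : IsCompact K)
    (hKab : K ⊆ Ioo a b) : ∃ c d, K ⊆ Icc c d ∧ Icc c d ⊆ Ioo a b := by
  rcases K.eq_empty_or_nonempty with rfl | hne
  · exact ⟨1, 0, empty_subset _, by simp⟩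
  · exact ⟨sInf K, sSup K, fun t ht => ⟨csInf_le hK.bddBelow ht, le_csSup hK.bddAbove ht⟩,
      Icc_subset_Ioo (hKab (hK.sInf_mem hne)).1 (hKab (hK.sSup_mem hne)).2⟩

theorem IsTestFunctionOn.exists_deriv_eq {η : ℝ → ℝ} (hη : IsTestFunctionOn η (Ioo a b))
    (h0 : ∫ t, η t = 0) : ∃ β, IsTestFunctionOn β (Ioo a b) ∧ deriv β = η := by
  set β : ℝ → ℝ := fun t => ∫ r in Iic t, η r with hβ
  have hβ_eq : β = fun t => β 0 + ∫ r in (0 : ℝ)..t, η r := by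
    funext t
    rw [← intervalIntegral.integral_Iic_sub_Iic hη.integrable.integrableOn
      hη.integrable.integrableOn, add_sub_cancel]
  have hderiv (t : ℝ) : HasDerivAt β (η t) t := by
    rw [hβ_eq]
    exact (hη.continuous.integral_hasStrictDerivAt 0 t).hasDerivAt.const_add _
  have hβ_deriv : deriv β = η := funext fun t => (hderiv t).deriv
  obtain ⟨c, d, hcd, hcd_sub⟩ :=
    exists_subset_Icc_of_isCompact_of_subset_Ioo hη.hasCompactSupport hη.tsupport_subset
  have hη_zero {r : ℝ} (hr : r ∉ Icc c d) : η r = 0 :=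
    image_eq_zero_of_notMem_tsupport fun hr' => hr (hcd hr')
  have hsupp : tsupport β ⊆ Icc c d := by
    refine closure_minimal (fun t ht => ?_) isClosed_Icc
    by_contra htcd
    refine ht ?_
    rcases not_and_or.1 htcd with htc | htd
    · exact setIntegral_eq_zero_of_forall_eq_zero fun r hr =>
        hη_zero fun hr' => htc (hr'.1.trans hr)
    · rw [hβ, ← h0]
      exact setIntegral_eq_integral_of_forall_compl_eq_zero fun r hr =>
        hη_zero fun hr' => htd ((not_le.1 hr).le.trans hr'.2)
  refine ⟨β, ⟨?_, isCompact_Icc.of_isClosed_subset isClosed_closure hsupp,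
    hsupp.trans hcd_sub⟩, hβ_deriv⟩
  rw [contDiff_infty_iff_deriv, hβ_deriv]
  exact ⟨fun t => (hderiv t).differentiableAt, hη.contDiff⟩

-- If `∫ β = 1`, then `η - (∫ η) β` is the derivative of a test function for every test function
-- `η`, so `∫ f η = (∫ η) (∫ f β)`.
theorem HasWeakLineDerivOn.ae_eq_const (hab : a < b)
    (h : HasWeakLineDerivOn f (fun _ => 0) (Ioo a b) 1) :
    ∃ c, ∀ᵐ t ∂volume.restrict (Ioo a b), f t = c := by
  obtain ⟨β, hβ, hβ_one⟩ :=
    exists_isTestFunctionOn_integral_eq_one volume isOpen_Ioo (nonempty_Ioo.2 hab)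
  set c := ∫ t in Ioo a b, β t * f t
  have hc : IntegrableOn (fun _ => c) (Ioo a b) := by simp
  refine ⟨c, (ae_eq_zero_of_forall_setIntegral_testFunction_mul_eq_zero isOpen_Ioo
    (h.integrableOn.sub hc) fun η hη => ?_).mono fun t ht => sub_eq_zero.1 ht⟩
  set m := ∫ t in Ioo a b, η t
  have hm : ∫ t, η t = m := by simpa using (hη.setIntegral_mul (f := fun _ => 1)).symm
  obtain ⟨B, hB, hB_deriv⟩ := (hη.sub_const_mul hβ m).exists_deriv_eq (by
    rw [integral_sub hη.integrable (hβ.integrable.const_mul m), integral_const_mul, hβ_one, hm,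
      mul_one, sub_self])
  calc ∫ t in Ioo a b, η t * (f t - c)
      = (∫ t in Ioo a b, η t * f t) - m * c := by
        simp_rw [mul_sub]
        rw [integral_sub (hη.integrable_mul h.integrableOn) (hη.integrable_mul hc),
          integral_mul_const]
    _ = ∫ t in Ioo a b, f t * fderiv ℝ B t 1 := by
        simp_rw [fderiv_apply_one_eq_deriv, hB_deriv, mul_sub, mul_left_comm _ m, mul_comm (f _)]
        rw [integral_sub (hη.integrable_mul h.integrableOn)
          ((hβ.integrable_mul h.integrableOn).const_mul m), integral_const_mul]
    _ = 0 := by rw [h.integral_mul_fderiv B hB]; simp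

/-- `f` is absolutely continuous on `(a, b)` with derivative `g ∈ L¹(a, b)`, so that
`IsW11On f a b` says that `f` is a primitive of some `g`. -/
structure IsPrimitiveOn (f g : ℝ → ℝ) (a b : ℝ) : Prop where
  integrableOn_deriv : IntegrableOn g (Ioo a b)
  sub_eq_integral : ∀ s ∈ Ioo a b, ∀ t ∈ Ioo a b, f t - f s = ∫ r in s..t, g r

theorem isW11On_iff_exists_isPrimitiveOn : IsW11On f a b ↔ ∃ g, IsPrimitiveOn f g a b :=
  ⟨fun ⟨g, hg, hfg⟩ => ⟨g, hg, hfg⟩, fun ⟨g, hg, hfg⟩ => ⟨g, hg, hfg⟩⟩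

theorem isPrimitiveOn_integral (hg : IntegrableOn g (Ioo a b)) :
    IsPrimitiveOn (fun t => ∫ r in a..t, g r) g a b := by
  have hint : ∀ t ∈ Ioo a b, IntervalIntegrable g volume a t := fun t ht =>
    (intervalIntegrable_iff_integrableOn_Ioo_of_le ht.1.le).2
      (hg.mono_set (Ioo_subset_Ioo_right ht.2.le))
  exact ⟨hg, fun s hs t ht => intervalIntegral.integral_interval_sub_left (hint t ht) (hint s hs)⟩

theorem isPrimitiveOn_const (k : ℝ) : IsPrimitiveOn (fun _ => k) (fun _ => 0) a b :=
  ⟨integrableOn_zero, by simp⟩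

theorem isPrimitiveOn_id : IsPrimitiveOn (fun t => t) (fun _ => 1) a b :=
  ⟨integrableOn_const (by simp), by simp⟩

namespace IsPrimitiveOn

theorem exists_absolutelyContinuousOnInterval (hab : a < b) (h : IsPrimitiveOn f g a b) :
    ∃ F, AbsolutelyContinuousOnInterval F a b ∧ EqOn F f (Ioo a b) ∧
      ∀ᵐ t, t ∈ Ioo a b → HasDerivAt F (g t) t := by
  obtain ⟨m, hm⟩ := nonempty_Ioo.2 hab
  have hint : IntervalIntegrable g volume a b :=
    (intervalIntegrable_iff_integrableOn_Ioo_of_le hab.le).2 h.integrableOn_deriv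
  have hm' : m ∈ uIcc a b := Icc_subset_uIcc (Ioo_subset_Icc_self hm)
  refine ⟨fun t => f m + ∫ r in m..t, g r, ?_, fun t ht => ?_, ?_⟩
  · exact (contDiff_const (n := 1)).contDiffOn.absolutelyContinuousOnInterval.add
      (hint.absolutelyContinuousOnInterval_intervalIntegral hm')
  · simp only [← h.sub_eq_integral m hm t ht, add_sub_cancel]
  · filter_upwards [hint.ae_hasDerivAt_integral] with t ht htab
    exact (ht (Icc_subset_uIcc (Ioo_subset_Icc_self htab)) m hm').const_add _

theorem ae_hasDerivAt (hab : a < b) (h : IsPrimitiveOn f g a b) :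
    ∀ᵐ t ∂volume.restrict (Ioo a b), HasDerivAt f (g t) t := by
  obtain ⟨F, -, hFf, hF⟩ := h.exists_absolutelyContinuousOnInterval hab
  rw [ae_restrict_iff' measurableSet_Ioo]
  filter_upwards [hF] with t ht htab
  exact (ht htab).congr_of_eventuallyEq
    (hFf.symm.eventuallyEq_of_mem (isOpen_Ioo.mem_nhds htab))

theorem boundedVariationOn (hab : a < b) (h : IsPrimitiveOn f g a b) :
    BoundedVariationOn f (Ioo a b) := by
  obtain ⟨F, hF, hFf, -⟩ := h.exists_absolutelyContinuousOnInterval hab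
  rw [BoundedVariationOn, ← eVariationOn.congr hFf]
  exact hF.boundedVariationOn.mono (Ioo_subset_Icc_self.trans Icc_subset_uIcc)

theorem continuousOn (hab : a < b) (h : IsPrimitiveOn f g a b) : ContinuousOn f (Ioo a b) := by
  obtain ⟨F, hF, hFf, -⟩ := h.exists_absolutelyContinuousOnInterval hab
  exact (hF.continuousOn.mono (Ioo_subset_Icc_self.trans Icc_subset_uIcc)).congr hFf.symm

theorem hasWeakLineDerivOn (hab : a < b) (h : IsPrimitiveOn f g a b) :
    HasWeakLineDerivOn f g (Ioo a b) 1 := by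
  obtain ⟨F, hF, hFf, hF_deriv⟩ := h.exists_absolutelyContinuousOnInterval hab
  refine ⟨?_, h.integrableOn_deriv, fun φ hφ => ?_⟩
  · have hF_cont := uIcc_of_le hab.le ▸ hF.continuousOn
    exact (hF_cont.integrableOn_Icc.mono_set Ioo_subset_Icc_self).congr_fun hFf measurableSet_Ioo
  have hφ_ac : AbsolutelyContinuousOnInterval φ a b :=
    (hφ.contDiff.of_le (mod_cast le_top)).contDiffOn.absolutelyContinuousOnInterval
  calc ∫ t in Ioo a b, f t * fderiv ℝ φ t 1
      = ∫ t in a..b, F t * deriv φ t := by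
        rw [intervalIntegral.integral_of_le hab.le, integral_Ioc_eq_integral_Ioo]
        exact setIntegral_congr_fun measurableSet_Ioo fun t ht => by simp [hFf ht]
    _ = -∫ t in a..b, deriv F t * φ t := by
        rw [hF.integral_mul_deriv_eq_deriv_mul hφ_ac, hφ.eq_zero_of_notMem (x := a) (by simp),
          hφ.eq_zero_of_notMem (x := b) (by simp)]
        ring
    _ = -∫ t in Ioo a b, φ t * g t := by
        rw [intervalIntegral.integral_of_le hab.le, integral_Ioc_eq_integral_Ioo]
        refine congrArg _ (setIntegral_congr_ae measurableSet_Ioo ?_)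
        filter_upwards [hF_deriv] with t ht htab
        rw [(ht htab).deriv, mul_comm]

end IsPrimitiveOn

theorem HasWeakLineDerivOn.exists_isPrimitiveOn (hab : a < b)
    (h : HasWeakLineDerivOn f f' (Ioo a b) 1) :
    ∃ F, IsPrimitiveOn F f' a b ∧ f =ᵐ[volume.restrict (Ioo a b)] F := by
  have hG := isPrimitiveOn_integral h.integrableOn_deriv
  obtain ⟨c, hc⟩ := ((h.sub (hG.hasWeakLineDerivOn hab)).congr_ae .rfl
    (.of_forall fun t => sub_self (f' t))).ae_eq_const hab
  refine ⟨fun t => c + ∫ r in a..t, f' r, ⟨h.integrableOn_deriv, fun s hs t ht => ?_⟩,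
    hc.mono fun t ht => sub_eq_iff_eq_add.1 ht⟩
  rw [add_sub_add_left_eq_sub, hG.sub_eq_integral s hs t ht]

end Line

section Product

theorem ae_eq_zero_of_forall_setIntegral_prod_eq_zero {X Y : Type*} [MeasurableSpace X]
    [MeasurableSpace Y] {μ : Measure X} {ν : Measure Y} {f : X × Y → ℝ}
    (hf : Integrable f (μ.prod ν))
    (h : ∀ s t, MeasurableSet s → MeasurableSet t → ∫ z in s ×ˢ t, f z ∂μ.prod ν = 0) :
    f =ᵐ[μ.prod ν] 0 := by
  have huniv : ∫ z, f z ∂μ.prod ν = 0 := by simpa using h univ univ .univ .univ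
  refine hf.ae_eq_zero_of_forall_setIntegral_eq_zero fun s hs hfin => ?_
  clear hfin
  induction s, hs using MeasurableSpace.induction_on_inter generateFrom_prod.symm isPiSystem_prod
  with
  | empty => simp
  | basic s hs =>
    obtain ⟨A, hA, B, hB, rfl⟩ := hs
    exact h A B hA hB
  | compl s hs ih => rw [setIntegral_compl hs hf, huniv, ih, sub_zero]
  | iUnion A hdisj hA ih =>
    rw [integral_iUnion hA hdisj hf.integrableOn]
    simp [ih]

section Slices

variable {E Y : Type*} [NormedAddCommGroup E] [NormedSpace ℝ E] [MeasurableSpace E]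
  [OpensMeasurableSpace E] [MeasurableSpace Y] {μ : Measure E} {ν : Measure Y} {U : Set E}
  {V : Set Y} {α : E → ℝ} {w : E × Y → ℝ}

theorem IsTestFunctionOn.integrable_fst_mul (hα : IsTestFunctionOn α U)
    (hw : Integrable w (μ.prod ν)) :
    Integrable (fun z => α z.1 * w z) (μ.prod ν) := by
  obtain ⟨C, hC⟩ := hα.continuous.bounded_above_of_compact_support hα.hasCompactSupport
  exact hw.bdd_mul (hα.continuous.measurable.comp measurable_fst).aestronglyMeasurable
    (.of_forall fun z => hC z.1)

theorem IsTestFunctionOn.integrableOn_setIntegral_mul [SFinite μ] [SFinite ν]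
    (hα : IsTestFunctionOn α U) (hw : IntegrableOn w (U ×ˢ V) (μ.prod ν)) :
    IntegrableOn (fun y => ∫ x in U, α x * w (x, y) ∂μ) V ν := by
  rw [IntegrableOn, ← Measure.prod_restrict] at hw
  exact (hα.integrable_fst_mul hw).integral_prod_right

end Slices

variable {E F : Type*} [NormedAddCommGroup E] [NormedSpace ℝ E] [MeasureSpace E] [BorelSpace E]
  [SFinite (volume : Measure E)]
  [NormedAddCommGroup F] [NormedSpace ℝ F] [MeasureSpace F] [BorelSpace F]
  [SecondCountableTopology F] [SFinite (volume : Measure F)]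
  {U : Set E} {V : Set F} {w g : E × F → ℝ} {α : E → ℝ} {β : F → ℝ}

theorem setIntegral_prod_mul_testFunction_mul_testFunction (hw : IntegrableOn w (U ×ˢ V))
    (hα : IsTestFunctionOn α U) (hβ : IsTestFunctionOn β V) :
    ∫ z in U ×ˢ V, w z * (α z.1 * β z.2) =
      ∫ y in V, (∫ x in U, α x * w (x, y)) * β y := by
  have hint := (hα.prod hβ).integrable_mul' hw
  rw [Measure.volume_eq_prod, ← Measure.prod_restrict] at hint ⊢
  rw [integral_prod_symm _ hint]
  simp_rw [← integral_mul_const]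
  congr! 4
  ring

theorem ae_eq_zero_of_forall_setIntegral_mul_testFunction_mul_testFunction_eq_zero
    [FiniteDimensional ℝ E] [FiniteDimensional ℝ F] (hU : IsOpen U) (hV : IsOpen V)
    (hw : IntegrableOn w (U ×ˢ V))
    (h : ∀ α β, IsTestFunctionOn α U → IsTestFunctionOn β V →
      ∫ z in U ×ˢ V, w z * (α z.1 * β z.2) = 0) :
    ∀ᵐ z ∂volume.restrict (U ×ˢ V), w z = 0 := by
  have havg (α : E → ℝ) (hα : IsTestFunctionOn α U) :
      ∀ᵐ y ∂volume.restrict V, ∫ x in U, α x * w (x, y) = 0 :=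
    ae_eq_zero_of_forall_setIntegral_testFunction_mul_eq_zero hV
      (hα.integrableOn_setIntegral_mul hw) fun β hβ => by
        simp_rw [mul_comm (β _)]
        rw [← setIntegral_prod_mul_testFunction_mul_testFunction hw hα hβ, h α β hα hβ]
  rw [IntegrableOn, Measure.volume_eq_prod, ← Measure.prod_restrict] at hw
  have hslice (B : Set F) :
      ∀ᵐ x ∂volume.restrict U, ∫ y in B, w (x, y) ∂volume.restrict V = 0 := by
    have hwB : Integrable w ((volume.restrict U).prod ((volume.restrict V).restrict B)) :=
      hw.mono_measure (Measure.prod_mono le_rfl Measure.restrict_le_self)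
    refine ae_eq_zero_of_forall_setIntegral_testFunction_mul_eq_zero hU
      hwB.integral_prod_left fun α hα => ?_
    simp_rw [← integral_const_mul]
    rw [integral_integral_swap (hα.integrable_fst_mul hwB)]
    exact integral_eq_zero_of_ae (ae_restrict_of_ae (havg α hα))
  rw [Measure.volume_eq_prod, ← Measure.prod_restrict]
  refine ae_eq_zero_of_forall_setIntegral_prod_eq_zero hw fun A B _ _ => ?_
  rw [setIntegral_prod _ hw.integrableOn]
  exact integral_eq_zero_of_ae (ae_restrict_of_ae (hslice B))

namespace HasWeakLineDerivOn

variable {v : F}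

theorem comp_swap {p : E × F} (h : HasWeakLineDerivOn w g (U ×ˢ V) p) :
    HasWeakLineDerivOn (w ∘ Prod.swap) (g ∘ Prod.swap) (V ×ˢ U) p.swap := by
  rw [← preimage_swap_prod]
  exact HasWeakLineDerivOn.comp_continuousLinearEquiv (ContinuousLinearEquiv.prodComm ℝ F E)
    Measure.measurePreserving_swap h

theorem setIntegral_testFunction_mul (h : HasWeakLineDerivOn w g (U ×ˢ V) (0, v))
    (hα : IsTestFunctionOn α U) :
    HasWeakLineDerivOn (fun y => ∫ x in U, α x * w (x, y)) (fun y => ∫ x in U, α x * g (x, y))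
      V v where
  integrableOn := hα.integrableOn_setIntegral_mul h.integrableOn
  integrableOn_deriv := hα.integrableOn_setIntegral_mul h.integrableOn_deriv
  integral_mul_fderiv β hβ := by
    have hfderiv (z : E × F) :
        fderiv ℝ (fun z : E × F => α z.1 * β z.2) z (0, v) = α z.1 * fderiv ℝ β z.2 v := by
      have hα' := (hα.differentiable z.1).hasFDerivAt.comp z hasFDerivAt_fst
      have hβ' := (hβ.differentiable z.2).hasFDerivAt.comp z hasFDerivAt_snd
      exact (DFunLike.congr_fun (hα'.mul hβ').fderiv (0, v)).trans (by simp)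
    have hparts := h.integral_mul_fderiv _ (hα.prod hβ)
    simp_rw [hfderiv] at hparts
    rw [← setIntegral_prod_mul_testFunction_mul_testFunction h.integrableOn hα (hβ.fderiv_apply v),
      hparts]
    simp_rw [mul_comm (β _)]
    rw [← setIntegral_prod_mul_testFunction_mul_testFunction h.integrableOn_deriv hα hβ]
    simp_rw [mul_comm (g _)]

theorem mul_prod_snd {a : E → ℝ} {f f' : F → ℝ} (ha : IntegrableOn a U)
    (h : HasWeakLineDerivOn f f' V v) :
    HasWeakLineDerivOn (fun z : E × F => a z.1 * f z.2) (fun z => a z.1 * f' z.2) (U ×ˢ V)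
      (0, v) := by
  have hint {k : F → ℝ} (hk : IntegrableOn k V) :
      IntegrableOn (fun z : E × F => a z.1 * k z.2) (U ×ˢ V) := by
    rw [IntegrableOn, Measure.volume_eq_prod, ← Measure.prod_restrict]
    exact ha.mul_prod hk
  refine ⟨hint h.integrableOn, hint h.integrableOn_deriv, fun φ hφ => ?_⟩
  have hfderiv (x : E) (y : F) : fderiv ℝ φ (x, y) (0, v) = fderiv ℝ (fun y => φ (x, y)) y v := by
    have hx := (hφ.differentiable (x, y)).hasFDerivAt.comp y (hasFDerivAt_prodMk_right x y)
    exact DFunLike.congr_fun hx.fderiv.symm v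
  have hleft := (hφ.fderiv_apply (0, v)).integrable_mul' (hint h.integrableOn)
  have hright := hφ.integrable_mul (hint h.integrableOn_deriv)
  calc ∫ z in U ×ˢ V, a z.1 * f z.2 * fderiv ℝ φ z (0, v)
      = ∫ x in U, a x * ∫ y in V, f y * fderiv ℝ (fun y => φ (x, y)) y v := by
        rw [Measure.volume_eq_prod, setIntegral_prod _ hleft]
        simp_rw [hfderiv, mul_assoc, integral_const_mul]
    _ = -∫ x in U, a x * ∫ y in V, φ (x, y) * f' y := by
        simp_rw [h.integral_mul_fderiv _ (hφ.slice _), mul_neg, integral_neg]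
    _ = -∫ z in U ×ˢ V, φ z * (a z.1 * f' z.2) := by
        rw [Measure.volume_eq_prod, setIntegral_prod _ hright]
        simp_rw [mul_left_comm (φ _), integral_const_mul]

theorem mul_prod_fst {a : E → ℝ} {f f' : F → ℝ} (h : HasWeakLineDerivOn f f' V v)
    (ha : IntegrableOn a U) :
    HasWeakLineDerivOn (fun z : F × E => f z.1 * a z.2) (fun z => f' z.1 * a z.2) (V ×ˢ U)
      (v, 0) := by
  simpa only [Function.comp_def, Prod.fst_swap, Prod.snd_swap, Prod.swap_prod_mk, mul_comm]
    using (mul_prod_snd ha h).comp_swap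

end HasWeakLineDerivOn

end Product

section Rectangle

variable {a b c d : ℝ}

theorem HasWeakLineDerivOn.exists_setIntegral_mul_eq_mul_integral {E : Type*}
    [NormedAddCommGroup E] [NormedSpace ℝ E] [MeasureSpace E] [BorelSpace E]
    [SFinite (volume : Measure E)] {U : Set E} {α : E → ℝ} {w : E × ℝ → ℝ} (hcd : c < d)
    (h : HasWeakLineDerivOn w (fun _ => 0) (U ×ˢ Ioo c d) (0, 1)) (hα : IsTestFunctionOn α U) :
    ∃ k, ∀ β, IsTestFunctionOn β (Ioo c d) →
      ∫ z in U ×ˢ Ioo c d, w z * (α z.1 * β z.2) = k * ∫ y in Ioo c d, β y := by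
  obtain ⟨k, hk⟩ := HasWeakLineDerivOn.ae_eq_const hcd
    (by simpa using h.setIntegral_testFunction_mul hα)
  refine ⟨k, fun β hβ => ?_⟩
  rw [setIntegral_prod_mul_testFunction_mul_testFunction h.integrableOn hα hβ,
    ← integral_const_mul]
  exact integral_congr_ae (hk.mono fun y hy => congrArg (· * β y) hy)

-- Pairing `w` with `α ⊗ β` gives both `k(α) ∫ β` and `k(β) ∫ α`, hence `k ∫ α ∫ β`.
theorem HasWeakLineDerivOn.ae_eq_const_of_prod {w : ℝ × ℝ → ℝ} (hab : a < b) (hcd : c < d)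
    (h₁ : HasWeakLineDerivOn w (fun _ => 0) (Ioo a b ×ˢ Ioo c d) (1, 0))
    (h₂ : HasWeakLineDerivOn w (fun _ => 0) (Ioo a b ×ˢ Ioo c d) (0, 1)) :
    ∃ k, ∀ᵐ z ∂volume.restrict (Ioo a b ×ˢ Ioo c d), w z = k := by
  obtain ⟨β₀, hβ₀, hβ₀_one⟩ :=
    exists_isTestFunctionOn_integral_eq_one volume isOpen_Ioo (nonempty_Ioo.2 hcd)
  have hβ₀_one' : ∫ y in Ioo c d, β₀ y = 1 := by
    simpa [hβ₀_one] using hβ₀.setIntegral_mul (f := fun _ => 1) (μ := volume)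
  obtain ⟨k, hk⟩ : ∃ k, ∀ α, IsTestFunctionOn α (Ioo a b) →
      ∫ z in Ioo a b ×ˢ Ioo c d, w z * (α z.1 * β₀ z.2) = k * ∫ x in Ioo a b, α x := by
    obtain ⟨k, hk⟩ := h₁.comp_swap.exists_setIntegral_mul_eq_mul_integral hab hβ₀
    refine ⟨k, fun α hα => ?_⟩
    rw [← hk α hα, Measure.volume_eq_prod, ← setIntegral_prod_swap]
    simp [mul_comm]
  have hk_int : IntegrableOn (fun _ : ℝ × ℝ => k) (Ioo a b ×ˢ Ioo c d) :=
    integrableOn_const (by simp [Measure.volume_eq_prod, Measure.prod_prod, ENNReal.mul_eq_top])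
  refine ⟨k, (ae_eq_zero_of_forall_setIntegral_mul_testFunction_mul_testFunction_eq_zero
    isOpen_Ioo isOpen_Ioo (h₂.integrableOn.sub hk_int) fun α β hα hβ => ?_).mono
      fun z hz => sub_eq_zero.1 hz⟩
  obtain ⟨l, hl⟩ := h₂.exists_setIntegral_mul_eq_mul_integral hcd hα
  have hlk : l = k * ∫ x in Ioo a b, α x := by rw [← hk α hα, hl β₀ hβ₀, hβ₀_one', mul_one]
  simp_rw [Pi.sub_apply, sub_mul]
  rw [integral_sub ((hα.prod hβ).integrable_mul' h₂.integrableOn)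
    ((hα.prod hβ).integrable_mul' hk_int), integral_const_mul, hl β hβ, hlk,
    Measure.volume_eq_prod, setIntegral_prod_mul, mul_assoc, sub_self]

variable {F : Type*} [NormedAddCommGroup F] [NormedSpace ℝ F] [MeasureSpace F] [BorelSpace F]
  [SecondCountableTopology F] [SFinite (volume : Measure F)] {V : Set F} {v : F} {f q : F → ℝ}

theorem hasWeakLineDerivOn_fst_mul_add_fst (hab : a < b) (hf : IntegrableOn f V)
    (hq : IntegrableOn q V) :
    HasWeakLineDerivOn (fun z : ℝ × F => z.1 * f z.2 + q z.2) (fun z => f z.2) (Ioo a b ×ˢ V)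
      (1, 0) := by
  have h₁ := HasWeakLineDerivOn.mul_prod_fst (isPrimitiveOn_id.hasWeakLineDerivOn hab) hf
  have h₂ :=
    HasWeakLineDerivOn.mul_prod_fst ((isPrimitiveOn_const 1).hasWeakLineDerivOn hab) hq
  simpa using h₁.add h₂

theorem HasWeakLineDerivOn.fst_mul_add_snd {f' q' : F → ℝ} (hf : HasWeakLineDerivOn f f' V v)
    (hq : HasWeakLineDerivOn q q' V v) :
    HasWeakLineDerivOn (fun z : ℝ × F => z.1 * f z.2 + q z.2) (fun z => z.1 * f' z.2 + q' z.2)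
      (Ioo a b ×ˢ V) (0, v) := by
  have h₁ := HasWeakLineDerivOn.mul_prod_snd (a := fun x : ℝ => x) (U := Ioo a b)
    (continuous_id.integrableOn_Icc.mono_set Ioo_subset_Icc_self) hf
  have h₂ := HasWeakLineDerivOn.mul_prod_snd (a := fun _ : ℝ => 1) (U := Ioo a b)
    (integrableOn_const (by simp)) hq
  simpa using h₁.add h₂

-- Testing with `α` gives `(∫ x α) f + (∫ α) q`; the choices `-α'` and `α` with `∫ α = 1` isolate
-- `f` and then `q`.
theorem HasWeakLineDerivOn.exists_of_fst_mul_add {g : ℝ × F → ℝ} (hab : a < b)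
    (h : HasWeakLineDerivOn (fun z : ℝ × F => z.1 * f z.2 + q z.2) g (Ioo a b ×ˢ V) (0, v)) :
    ∃ f' q', HasWeakLineDerivOn f f' V v ∧ HasWeakLineDerivOn q q' V v := by
  have hone := (isPrimitiveOn_const 1).hasWeakLineDerivOn hab
  have hid := isPrimitiveOn_id.hasWeakLineDerivOn hab
  have havg (α : ℝ → ℝ) (hα : IsTestFunctionOn α (Ioo a b)) (y : F) :
      ∫ x in Ioo a b, α x * (x * f y + q y) =
        (∫ x in Ioo a b, x * α x) * f y + (∫ x in Ioo a b, 1 * α x) * q y := by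
    rw [← integral_mul_const, ← integral_mul_const, ← integral_add
      ((hα.integrable_mul' hid.integrableOn).mul_const _)
      ((hα.integrable_mul' hone.integrableOn).mul_const _)]
    congr! 2
    ring
  obtain ⟨α, hα, hα_one⟩ :=
    exists_isTestFunctionOn_integral_eq_one volume isOpen_Ioo (nonempty_Ioo.2 hab)
  have hα_one' : ∫ x in Ioo a b, α x * 1 = 1 := by rw [hα.setIntegral_mul]; simpa
  obtain ⟨f', hf⟩ : ∃ f', HasWeakLineDerivOn f f' V v := by
    have h' := (h.setIntegral_testFunction_mul (hα.fderiv_apply 1)).const_mul (-1)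
    simp only [havg _ (hα.fderiv_apply 1), hone.integral_mul_fderiv α hα,
      hid.integral_mul_fderiv α hα, hα_one', mul_zero, integral_zero] at h'
    exact ⟨_, by simpa using h'⟩
  obtain ⟨q', hq⟩ : ∃ q', HasWeakLineDerivOn q q' V v := by
    have h' :=
      (h.setIntegral_testFunction_mul hα).sub (hf.const_mul (∫ x in Ioo a b, x * α x))
    simp only [havg α hα, mul_comm _ (α _), hα_one', add_sub_cancel_left, one_mul] at h'
    exact ⟨_, h'⟩
  exact ⟨f', q', hf, hq⟩

end Rectangle

section Box

variable {a b c d : ℝ} {f g : V2 → ℝ} {v : V2}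

/-- The open rectangle `(a, b) × (c, d)`, so that `Rect = openBox 0 1 (-1) 1`. It is stated with
the coordinates of `V2`, as `Rect` is, rather than as a subset of `ℝ × ℝ`. -/
def openBox (a b c d : ℝ) : Set V2 := {x | x 0 ∈ Ioo a b ∧ x 1 ∈ Ioo c d}

theorem isOpen_openBox : IsOpen (openBox a b c d) :=
  (isOpen_Ioo.preimage (continuous_apply 0)).inter (isOpen_Ioo.preimage (continuous_apply 1))

theorem measurePreserving_finTwoArrow_restrict_openBox :
    MeasurePreserving (MeasurableEquiv.finTwoArrow (α := ℝ)) (volume.restrict (openBox a b c d))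
      ((volume.restrict (Ioo a b)).prod (volume.restrict (Ioo c d))) := by
  rw [Measure.prod_restrict]
  exact (volume_preserving_finTwoArrow ℝ).restrict_preimage_emb
    MeasurableEquiv.finTwoArrow.measurableEmbedding (Ioo a b ×ˢ Ioo c d)

theorem hasWeakLineDerivOn_openBox_iff :
    HasWeakLineDerivOn f g (openBox a b c d) v ↔
      HasWeakLineDerivOn (fun z : ℝ × ℝ => f ![z.1, z.2]) (fun z => g ![z.1, z.2])
        (Ioo a b ×ˢ Ioo c d) (v 0, v 1) := by
  have hmp := volume_preserving_finTwoArrow ℝ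
  have heta (x : V2) : ![x 0, x 1] = x := (finTwoArrowEquiv ℝ).symm_apply_apply x
  let e := ContinuousLinearEquiv.finTwoArrow ℝ ℝ
  constructor
  · intro h
    have h' := HasWeakLineDerivOn.comp_continuousLinearEquiv (v := (v 0, v 1)) e.symm
      (hmp.symm MeasurableEquiv.finTwoArrow)
      (show HasWeakLineDerivOn f g (openBox a b c d) ![v 0, v 1] by rwa [heta])
    exact h'
  · intro h
    have h' := HasWeakLineDerivOn.comp_continuousLinearEquiv (v := v) e hmp h
    exact h'.congr_ae (.of_forall fun x => congrArg f (heta x))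
      (.of_forall fun x => congrArg g (heta x))

theorem ae_openBox_of_ae_snd {p : ℝ → Prop} (h : ∀ᵐ t ∂volume.restrict (Ioo c d), p t) :
    ∀ᵐ x ∂volume.restrict (openBox a b c d), p (x 1) :=
  (Measure.quasiMeasurePreserving_snd.comp
    measurePreserving_finTwoArrow_restrict_openBox.quasiMeasurePreserving).ae h

theorem ae_ae_of_ae_openBox {p : V2 → Prop}
    (h : ∀ᵐ x ∂volume.restrict (openBox a b c d), p x) :
    ∀ᵐ t ∂volume.restrict (Ioo c d), ∀ᵐ s ∂volume.restrict (Ioo a b), p ![s, t] := by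
  have hprod := (measurePreserving_finTwoArrow_restrict_openBox.symm
    MeasurableEquiv.finTwoArrow).quasiMeasurePreserving.ae h
  exact Measure.ae_ae_of_ae_prod (Measure.measurePreserving_swap.quasiMeasurePreserving.ae hprod)

theorem HasWeakLineDerivOn.ae_eq_const_of_openBox (hab : a < b) (hcd : c < d)
    (h : ∀ j, HasWeakLineDerivOn f (fun _ => 0) (openBox a b c d) (Pi.single j 1)) :
    ∃ k, ∀ᵐ x ∂volume.restrict (openBox a b c d), f x = k := by
  obtain ⟨k, hk⟩ := HasWeakLineDerivOn.ae_eq_const_of_prod hab hcd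
    (hasWeakLineDerivOn_openBox_iff.1 (h 0)) (hasWeakLineDerivOn_openBox_iff.1 (h 1))
  rw [Measure.volume_eq_prod, ← Measure.prod_restrict] at hk
  have hk' := measurePreserving_finTwoArrow_restrict_openBox.quasiMeasurePreserving.ae hk
  refine ⟨k, hk'.mono fun x hx => ?_⟩
  rwa [← (finTwoArrowEquiv ℝ).symm_apply_apply x]

end Box

section Sobolev

variable {Ω : Set V2} {u w : V2 → V2} {g gu gs : V2 → Mat2} {σ : Measure V2}

theorem isSobolev11On_iff :
    IsSobolev11On Ω u g ↔
      ∀ i j, HasWeakLineDerivOn (fun x => u x i) (fun x => g x i j) Ω (Pi.single j 1) :=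
  ⟨fun h i j => ⟨h.int_u.eval i, h.int_gu i j, fun φ hφ =>
      h.ibp φ hφ.contDiff hφ.hasCompactSupport hφ.tsupport_subset i j⟩,
    fun h => ⟨.of_eval fun i => (h i 0).integrableOn, fun i j => (h i j).integrableOn_deriv,
      fun φ h₁ h₂ h₃ i j => (h i j).integral_mul_fderiv φ ⟨h₁, h₂, h₃⟩⟩⟩

theorem IsSobolev11On.congr_ae (h : IsSobolev11On Ω u g) {g' : V2 → Mat2}
    (hu : u =ᵐ[volume.restrict Ω] w) (hg : g =ᵐ[volume.restrict Ω] g') :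
    IsSobolev11On Ω w g' :=
  isSobolev11On_iff.2 fun i j => (isSobolev11On_iff.1 h i j).congr_ae
    (hu.mono fun _ hx => congrFun hx i) (hg.mono fun _ hx => congrFun₂ hx i j)

theorem IsSobolev11On.ae_unique (hΩ : IsOpen Ω) {g₁ g₂ : V2 → Mat2} (h₁ : IsSobolev11On Ω u g₁)
    (h₂ : IsSobolev11On Ω u g₂) : g₁ =ᵐ[volume.restrict Ω] g₂ := by
  have hall := ae_all_iff.2 fun i => ae_all_iff.2 fun j =>
    (isSobolev11On_iff.1 h₁ i j).ae_unique hΩ (isSobolev11On_iff.1 h₂ i j)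
  exact hall.mono fun x hx => Matrix.ext hx

theorem IsSobolev11On.hasBVDerivOn (h : IsSobolev11On Ω u g) :
    HasBVDerivOn Ω u g 0 fun _ => 0 where
  int_u := h.int_u
  int_gu := h.int_gu
  fin := by simp
  conc := by simp
  perp := .zero_left
  meas_gs _ _ := aemeasurable_const
  unit := by simp
  ibp φ h₁ h₂ h₃ i j := by simp [h.ibp φ h₁ h₂ h₃ i j]

theorem abs_apply_le_mnorm (M : Mat2) (i j : Fin 2) : |M i j| ≤ mnorm M := by
  refine Real.abs_le_sqrt ?_
  calc M i j ^ 2 ≤ ∑ l, M i l ^ 2 :=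
        Finset.single_le_sum (fun l _ => sq_nonneg (M i l)) (Finset.mem_univ j)
    _ ≤ ∑ k, ∑ l, M k l ^ 2 :=
        Finset.single_le_sum (f := fun k => ∑ l, M k l ^ 2)
          (fun k _ => Finset.sum_nonneg fun l _ => sq_nonneg (M k l)) (Finset.mem_univ i)

theorem HasBVDerivOn.integrable_apply (h : HasBVDerivOn Ω u gu σ gs) (i j : Fin 2) :
    Integrable (fun x => gs x i j) σ :=
  have : IsFiniteMeasure σ := ⟨h.fin.lt_top⟩
  .of_bound (h.meas_gs i j).aestronglyMeasurable 1
    (h.unit.mono fun x hx => hx ▸ abs_apply_le_mnorm (gs x) i j)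

theorem HasBVDerivOn.ae_eq_of_isSobolev11On (hΩ : IsOpen Ω) (h : HasBVDerivOn Ω u gu σ gs)
    (hg : IsSobolev11On Ω u g) : gu =ᵐ[volume.restrict Ω] g := by
  have hentry (i j : Fin 2) : ∀ᵐ x ∂volume.restrict Ω, g x i j - gu x i j = 0 := by
    refine ae_eq_zero_of_forall_setIntegral_eq_integral_of_mutuallySingular hΩ
      ((hg.int_gu i j).sub (h.int_gu i j)) (h.integrable_apply i j) h.perp fun φ hφ => ?_
    have h₁ := hg.ibp φ hφ.contDiff hφ.hasCompactSupport hφ.tsupport_subset i j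
    have h₂ := h.ibp φ hφ.contDiff hφ.hasCompactSupport hφ.tsupport_subset i j
    simp_rw [mul_sub]
    rw [integral_sub (hφ.integrable_mul (hg.int_gu i j)) (hφ.integrable_mul (h.int_gu i j))]
    linarith
  have hall := ae_all_iff.2 fun i => ae_all_iff.2 (hentry i)
  exact hall.mono fun x hx => Matrix.ext fun i j => (sub_eq_zero.1 (hx i j)).symm

end Sobolev

section LayerAffine

variable {a b c d : ℝ} {f f' q q' : ℝ → V2} {u : V2 → V2} {g : V2 → Mat2}

/-- The map `x ↦ x₁ f(x₂) + q(x₂)`, affine on every horizontal layer. The maps `R(x₂)x + ψ(x₂)`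
defining `A` are of this kind, with `f` the first column of `R`. -/
def layerAffine (f q : ℝ → V2) (x : V2) : V2 := x 0 • f (x 1) + q (x 1)

/-- The gradient of `layerAffine f q`, where `f'` and `q'` are the derivatives of `f` and `q`. -/
def layerAffineGrad (f f' q' : ℝ → V2) (x : V2) : Mat2 :=
  Matrix.of fun i => ![f (x 1) i, x 0 * f' (x 1) i + q' (x 1) i]

theorem isSobolev11On_layerAffine (hab : a < b)
    (hf : ∀ i, HasWeakLineDerivOn (fun t => f t i) (fun t => f' t i) (Ioo c d) 1)
    (hq : ∀ i, HasWeakLineDerivOn (fun t => q t i) (fun t => q' t i) (Ioo c d) 1) :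
    IsSobolev11On (openBox a b c d) (layerAffine f q) (layerAffineGrad f f' q') := by
  refine isSobolev11On_iff.2 fun i => Fin.forall_fin_two.2 ⟨?_, ?_⟩
  · exact hasWeakLineDerivOn_openBox_iff.2
      (hasWeakLineDerivOn_fst_mul_add_fst hab (hf i).integrableOn (hq i).integrableOn)
  · exact hasWeakLineDerivOn_openBox_iff.2 ((hf i).fst_mul_add_snd (hq i))

theorem IsSobolev11On.exists_of_layerAffine (hab : a < b)
    (h : IsSobolev11On (openBox a b c d) (layerAffine f q) g) :
    ∃ f' q' : ℝ → V2,
      (∀ i, HasWeakLineDerivOn (fun t => f t i) (fun t => f' t i) (Ioo c d) 1) ∧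
      (∀ i, HasWeakLineDerivOn (fun t => q t i) (fun t => q' t i) (Ioo c d) 1) ∧
      g =ᵐ[volume.restrict (openBox a b c d)] layerAffineGrad f f' q' := by
  have hi (i : Fin 2) := HasWeakLineDerivOn.exists_of_fst_mul_add
    (f := fun t => f t i) (q := fun t => q t i) (v := (1 : ℝ)) hab
    (hasWeakLineDerivOn_openBox_iff.1 (isSobolev11On_iff.1 h i 1))
  choose f' q' hf hq using hi
  exact ⟨fun t i => f' i t, fun t i => q' i t, hf, hq,
    h.ae_unique isOpen_openBox (isSobolev11On_layerAffine hab hf hq)⟩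

theorem det_layerAffineGrad (x : V2) :
    (layerAffineGrad f f' q' x).det =
      (f (x 1) 0 * f' (x 1) 1 - f (x 1) 1 * f' (x 1) 0) * x 0 +
        (f (x 1) 0 * q' (x 1) 1 - f (x 1) 1 * q' (x 1) 0) := by
  simp only [layerAffineGrad, Matrix.det_fin_two, Matrix.of_apply, Matrix.cons_val_zero,
    Matrix.cons_val_one, Matrix.cons_val_fin_one]
  ring

end LayerAffine

section Rigidity

variable {a b : ℝ}

theorem HasWeakLineDerivOn.ae_sum_mul_deriv_eq_zero {ι : Type*} [Fintype ι] {f f' : ι → ℝ → ℝ}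
    {k : ℝ} (hab : a < b) (h : ∀ i, HasWeakLineDerivOn (f i) (f' i) (Ioo a b) 1)
    (hf : ∀ᵐ t ∂volume.restrict (Ioo a b), ∑ i, f i t ^ 2 = k) :
    ∀ᵐ t ∂volume.restrict (Ioo a b), ∑ i, f i t * f' i t = 0 := by
  choose F hF hfF using fun i => (h i).exists_isPrimitiveOn hab
  have hfF' := ae_all_iff.2 hfF
  have hF_eq : EqOn (fun t => ∑ i, F i t ^ 2) (fun _ => k) (Ioo a b) := by
    refine Measure.eqOn_Ioo_of_ae_eq volume ?_
      (continuousOn_finsetSum _ fun i _ => ((hF i).continuousOn hab).pow 2) continuousOn_const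
    filter_upwards [hf, hfF'] with t ht htF
    simpa only [htF] using ht
  filter_upwards [hfF', ae_all_iff.2 fun i => (hF i).ae_hasDerivAt hab,
    ae_restrict_mem measurableSet_Ioo] with t htF ht htab
  have hderiv : HasDerivAt (fun t => ∑ i, F i t ^ 2) (∑ i, 2 * F i t * f' i t) t := by
    simpa using HasDerivAt.fun_sum fun i _ => (ht i).fun_pow 2
  have hzero := hderiv.unique ((hasDerivAt_const t k).congr_of_eventuallyEq
    (hF_eq.eventuallyEq_of_mem (isOpen_Ioo.mem_nhds htab)))
  simp_rw [mul_assoc, ← Finset.mul_sum] at hzero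
  simpa [htF] using hzero

-- A plane unit vector is orthogonal to its derivative; being also parallel to it, the derivative
-- vanishes.
theorem HasWeakLineDerivOn.ae_eq_const_of_sq_add_sq_eq_one {f f' : Fin 2 → ℝ → ℝ} (hab : a < b)
    (h : ∀ i, HasWeakLineDerivOn (f i) (f' i) (Ioo a b) 1)
    (hunit : ∀ᵐ t ∂volume.restrict (Ioo a b), f 0 t ^ 2 + f 1 t ^ 2 = 1)
    (hpar : ∀ᵐ t ∂volume.restrict (Ioo a b), f 0 t * f' 1 t - f 1 t * f' 0 t = 0) (i : Fin 2) :
    ∃ k, ∀ᵐ t ∂volume.restrict (Ioo a b), f i t = k := by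
  have horth := HasWeakLineDerivOn.ae_sum_mul_deriv_eq_zero hab h
    (by simpa only [Fin.sum_univ_two] using hunit)
  have hzero : ∀ᵐ t ∂volume.restrict (Ioo a b), ∀ i, f' i t = 0 := by
    filter_upwards [hunit, horth, hpar] with t ht ht_orth ht_par
    rw [Fin.sum_univ_two] at ht_orth
    refine Fin.forall_fin_two.2 ⟨?_, ?_⟩
    · linear_combination -f' 0 t * ht + f 0 t * ht_orth - f 1 t * ht_par
    · linear_combination -f' 1 t * ht + f 1 t * ht_orth + f 0 t * ht_par
  exact ((h i).congr_ae .rfl (hzero.mono fun t ht => ht i)).ae_eq_const hab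

theorem eq_zero_of_ae_mul_add_eq {k l m : ℝ} (hab : a < b)
    (h : ∀ᵐ s ∂volume.restrict (Ioo a b), k * s + l = m) : k = 0 := by
  have hEq : EqOn (fun s => k * s + l) (fun _ => m) (Ioo a b) :=
    Measure.eqOn_Ioo_of_ae_eq volume h (by fun_prop) (by fun_prop)
  obtain ⟨s, hs⟩ := nonempty_Ioo.2 hab
  have hderiv : HasDerivAt (fun s => k * s + l) k s := by
    simpa using ((hasDerivAt_id s).const_mul k).add_const l
  exact hderiv.unique ((hasDerivAt_const s m).congr_of_eventuallyEq
    (hEq.eventuallyEq_of_mem (isOpen_Ioo.mem_nhds hs)))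

end Rigidity

section SingleSlip

variable {R G : Mat2} {γ : ℝ}

theorem mem_SO2_iff : R ∈ SO2 ↔ R 0 0 = R 1 1 ∧ R 0 1 = -R 1 0 ∧ R 0 0 ^ 2 + R 0 1 ^ 2 = 1 := by
  rw [← Matrix.mem_specialOrthogonalGroup_fin_two_iff, Matrix.mem_specialOrthogonalGroup_iff,
    Matrix.mem_orthogonalGroup_iff]
  rfl

theorem sq_add_sq_eq_one_of_mem_SO2 (hR : R ∈ SO2) : R 0 0 ^ 2 + R 1 0 ^ 2 = 1 := by
  obtain ⟨-, h01, hsq⟩ := mem_SO2_iff.1 hR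
  rwa [h01, neg_sq] at hsq

theorem mul_one_add_smul_outer_e1_e2 (R : Mat2) (γ : ℝ) :
    R * (1 + γ • outer e1 e2) = Matrix.of fun i => ![R i 0, R i 1 + R i 0 * γ] := by
  ext i j
  fin_cases j <;> simp [Matrix.mul_apply, Fin.sum_univ_two, outer, e1, e2, add_comm]

theorem det_mul_one_add_smul_outer_e1_e2 (hR : R ∈ SO2) : (R * (1 + γ • outer e1 e2)).det = 1 := by
  rw [Matrix.det_mul, hR.2, Matrix.det_fin_two]
  simp [outer, e1, e2]

-- `Rᵀ G` has first column `e₁` and determinant one, so it is a shear.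
theorem eq_mul_one_add_smul_outer_e1_e2 (hR : R ∈ SO2) (hcol : ∀ i, G i 0 = R i 0)
    (hdet : G.det = 1) :
    G = R * (1 + (R 0 0 * G 0 1 + R 1 0 * G 1 1) • outer e1 e2) := by
  obtain ⟨h00, h01, -⟩ := mem_SO2_iff.1 hR
  have hsq := sq_add_sq_eq_one_of_mem_SO2 hR
  rw [Matrix.det_fin_two, hcol, hcol] at hdet
  rw [mul_one_add_smul_outer_e1_e2]
  ext i j
  fin_cases i <;> fin_cases j
  · exact hcol 0
  · simp only [Fin.zero_eta, Fin.mk_one, Matrix.of_apply, h01, Matrix.cons_val_one,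
      Matrix.cons_val_fin_one]
    linear_combination -G 0 1 * hsq - R 1 0 * hdet
  · exact hcol 1
  · simp only [Fin.mk_one, Matrix.of_apply, ← h00, Matrix.cons_val_one,
      Matrix.cons_val_fin_one]
    linear_combination -G 1 1 * hsq + R 0 0 * hdet

end SingleSlip

section ShearMaps

variable {a b c d : ℝ} {R : Mat2} {θ γ : ℝ → ℝ} {k : V2} {u : V2 → V2} {g : V2 → Mat2}

theorem mulVec_add_smul_mulVec_e1_add_eq_layerAffine (R : Mat2) (θ : ℝ → ℝ) (k : V2) :
    (fun x => R.mulVec x + θ (x 1) • R.mulVec e1 + k) =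
      layerAffine (fun _ i => R i 0) (fun t i => R i 1 * t + R i 0 * θ t + k i) := by
  ext x i
  fin_cases i <;> simp [layerAffine, e1] <;> ring

theorem IsPrimitiveOn.isSobolev11On_shear (hab : a < b) (hcd : c < d) (hθ : IsPrimitiveOn θ γ c d)
    (R : Mat2) (k : V2) :
    IsSobolev11On (openBox a b c d) (fun x => R.mulVec x + θ (x 1) • R.mulVec e1 + k)
      fun x => R * (1 + γ (x 1) • outer e1 e2) := by
  have hconst (r : ℝ) := (isPrimitiveOn_const r).hasWeakLineDerivOn hcd
  have hq (i : Fin 2) := (((isPrimitiveOn_id.hasWeakLineDerivOn hcd).const_mul (R i 1)).add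
    ((hθ.hasWeakLineDerivOn hcd).const_mul (R i 0))).add (hconst (k i))
  rw [mulVec_add_smul_mulVec_e1_add_eq_layerAffine]
  refine (isSobolev11On_layerAffine hab (fun i => hconst (R i 0)) hq).congr_ae .rfl
    (.of_forall fun x => ?_)
  simp [layerAffineGrad, mul_one_add_smul_outer_e1_e2]

theorem memAOn_of_ae_eq_shear (hab : a < b) (hcd : c < d) (hR : R ∈ SO2)
    (hθ : IsPrimitiveOn θ γ c d)
    (hu : ∀ᵐ x ∂volume.restrict (openBox a b c d),
      u x = R.mulVec x + θ (x 1) • R.mulVec e1 + k) :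
    memAOn (openBox a b c d) c d u := by
  have hsob := (hθ.isSobolev11On_shear hab hcd R k).congr_ae (hu.mono fun _ hx => hx.symm) .rfl
  have hlip : LipschitzWith ‖vToE (R.mulVec e1)‖₊ fun r : ℝ => vToE (r • R.mulVec e1 + k) := by
    refine LipschitzWith.of_dist_le_mul fun r s => ?_
    rw [dist_eq_norm, vToE, vToE, ← map_sub, add_sub_add_right_eq_sub, ← sub_smul, map_smul,
      norm_smul, mul_comm]
    rfl
  have hbv := hθ.boundedVariationOn hcd
  refine ⟨_, 0, _, hsob.hasBVDerivOn, ⟨fun _ => R, fun t => θ t • R.mulVec e1 + k, fun _ _ => hR,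
    (LipschitzWith.const (mToE R)).comp_boundedVariationOn hbv, hlip.comp_boundedVariationOn hbv,
    hu.mono fun x hx => hx.trans (add_assoc _ _ _)⟩,
    .of_forall fun _ => det_mul_one_add_smul_outer_e1_e2 hR⟩

theorem IsSobolev11On.exists_ae_eq_shear (hab : a < b) (hcd : c < d)
    (hγ : IntegrableOn γ (Ioo c d))
    (h : IsSobolev11On (openBox a b c d) u fun x => R * (1 + γ (x 1) • outer e1 e2)) :
    ∃ θ k, IsPrimitiveOn θ γ c d ∧ ∀ᵐ x ∂volume.restrict (openBox a b c d),
      u x = R.mulVec x + θ (x 1) • R.mulVec e1 + k := by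
  have hθ := isPrimitiveOn_integral hγ
  have hshear := isSobolev11On_iff.1 (hθ.isSobolev11On_shear hab hcd R 0)
  have hconst (i : Fin 2) := HasWeakLineDerivOn.ae_eq_const_of_openBox hab hcd fun j =>
    ((isSobolev11On_iff.1 h i j).sub (hshear i j)).congr_ae .rfl (.of_forall fun _ => sub_self _)
  choose k hk using hconst
  refine ⟨_, k, hθ, (ae_all_iff.2 hk).mono fun x hx => funext fun i => ?_⟩
  simpa [add_comm] using sub_eq_iff_eq_add.1 (hx i)

end ShearMaps

section Characterization

variable {a b c d : ℝ} {u : V2 → V2} {g : V2 → Mat2}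

theorem memAOn.exists_ae_eq_layerAffine {Ω : Set V2} (hΩ : IsOpen Ω) (hu : memAOn Ω c d u)
    (hg : IsSobolev11On Ω u g) :
    ∃ (R : ℝ → Mat2) (q : ℝ → V2), (∀ t ∈ Ioo c d, R t ∈ SO2) ∧
      u =ᵐ[volume.restrict Ω] layerAffine (fun t i => R t i 0) q ∧
      ∀ᵐ x ∂volume.restrict Ω, (g x).det = 1 := by
  obtain ⟨gu, σ, gs, hbv, ⟨R, ψ, hR, -, -, huR⟩, hdet⟩ := hu
  refine ⟨R, fun t i => R t i 1 * t + ψ t i, hR, huR.mono fun x hx => ?_, ?_⟩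
  · ext i
    fin_cases i <;> simp [hx, layerAffine] <;> ring
  · filter_upwards [hdet, hbv.ae_eq_of_isSobolev11On hΩ hg] with x hx hgx
    rwa [← hgx]

theorem exists_mem_SO2_ae_col_eq (hcd : c < d) {R : ℝ → Mat2} (hR : ∀ t ∈ Ioo c d, R t ∈ SO2)
    {f' : ℝ → V2} (hf : ∀ i, HasWeakLineDerivOn (fun t => R t i 0) (fun t => f' t i) (Ioo c d) 1)
    (hpar : ∀ᵐ t ∂volume.restrict (Ioo c d), R t 0 0 * f' t 1 - R t 1 0 * f' t 0 = 0) :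
    ∃ S ∈ SO2, ∀ᵐ t ∂volume.restrict (Ioo c d), ∀ i, R t i 0 = S i 0 := by
  have hunit : ∀ᵐ t ∂volume.restrict (Ioo c d), R t 0 0 ^ 2 + R t 1 0 ^ 2 = 1 :=
    (ae_restrict_mem measurableSet_Ioo).mono fun t ht => sq_add_sq_eq_one_of_mem_SO2 (hR t ht)
  choose k hk using HasWeakLineDerivOn.ae_eq_const_of_sq_add_sq_eq_one hcd hf hunit hpar
  have hk' := ae_all_iff.2 hk
  have : NeBot (ae (volume.restrict (Ioo c d))) := ae_restrict_neBot.2 (by simp [hcd])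
  obtain ⟨t₀, ht₀, ht₀_mem⟩ := (hk'.and (ae_restrict_mem measurableSet_Ioo)).exists
  exact ⟨R t₀, hR t₀ ht₀_mem, hk'.mono fun t ht i => (ht i).trans (ht₀ i).symm⟩

theorem IsSobolev11On.exists_ae_grad_eq_of_layerAffine (hab : a < b) (hcd : c < d)
    {R : ℝ → Mat2} {q : ℝ → V2} (hR : ∀ t ∈ Ioo c d, R t ∈ SO2)
    (hg : IsSobolev11On (openBox a b c d) (layerAffine (fun t i => R t i 0) q) g)
    (hdet : ∀ᵐ x ∂volume.restrict (openBox a b c d), (g x).det = 1) :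
    ∃ S ∈ SO2, ∃ γ : ℝ → ℝ, IntegrableOn γ (Ioo c d) ∧
      g =ᵐ[volume.restrict (openBox a b c d)] fun x => S * (1 + γ (x 1) • outer e1 e2) := by
  obtain ⟨f', q', hf, hq, hgrad⟩ := hg.exists_of_layerAffine hab
  have hdet_slice := ae_ae_of_ae_openBox (hdet.congr (hgrad.mono fun x hx => by
    rw [hx, det_layerAffineGrad]))
  have hpar : ∀ᵐ t ∂volume.restrict (Ioo c d), R t 0 0 * f' t 1 - R t 1 0 * f' t 0 = 0 :=
    hdet_slice.mono fun t ht => eq_zero_of_ae_mul_add_eq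
      (l := R t 0 0 * q' t 1 - R t 1 0 * q' t 0) (m := 1) hab ht
  obtain ⟨S, hS, hRS⟩ := exists_mem_SO2_ae_col_eq hcd hR hf hpar
  have hconst (i : Fin 2) := (isPrimitiveOn_const (S i 0)).hasWeakLineDerivOn hcd
  have hu : layerAffine (fun _ i => S i 0) q =ᵐ[volume.restrict (openBox a b c d)]
      layerAffine (fun t i => R t i 0) q :=
    (ae_openBox_of_ae_snd hRS).mono fun x hx => by simp [layerAffine, hx]
  have hgS := hg.ae_unique isOpen_openBox
    ((isSobolev11On_layerAffine hab hconst hq).congr_ae hu .rfl)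
  refine ⟨S, hS, fun t => S 0 0 * q' t 0 + S 1 0 * q' t 1,
    ((hq 0).integrableOn_deriv.const_mul _).add ((hq 1).integrableOn_deriv.const_mul _), ?_⟩
  filter_upwards [hgS, hdet] with x hx hdetx
  have hcol (i : Fin 2) : g x i 0 = S i 0 := by simp [hx, layerAffineGrad]
  simpa [hx, layerAffineGrad] using eq_mul_one_add_smul_outer_e1_e2 hS hcol hdetx

theorem memAOn.exists_isSobolev11On_mul_one_add_smul_outer (hab : a < b) (hcd : c < d)
    (hu : memAOn (openBox a b c d) c d u) (hg : IsSobolev11On (openBox a b c d) u g) :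
    ∃ R ∈ SO2, ∃ γ : ℝ → ℝ, IntegrableOn γ (Ioo c d) ∧
      IsSobolev11On (openBox a b c d) u fun x => R * (1 + γ (x 1) • outer e1 e2) := by
  obtain ⟨R, q, hR, hu_eq, hdet⟩ := hu.exists_ae_eq_layerAffine isOpen_openBox hg
  obtain ⟨S, hS, γ, hγ, hg_eq⟩ :=
    (hg.congr_ae hu_eq .rfl).exists_ae_grad_eq_of_layerAffine hab hcd hR hdet
  exact ⟨S, hS, γ, hγ, hg.congr_ae .rfl hg_eq⟩

theorem charA_W11_Rect_general (hab : a < b) (hcd : c < d) (u : V2 → V2) :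
    ((memAOn (openBox a b c d) c d u ∧ ∃ g, IsSobolev11On (openBox a b c d) u g) ↔
      ((∃ g, IsSobolev11On (openBox a b c d) u g) ∧
        ∃ R ∈ SO2, ∃ θ, IsW11On θ c d ∧ ∃ k : V2,
          ∀ᵐ x ∂volume.restrict (openBox a b c d),
            u x = R.mulVec x + θ (x 1) • R.mulVec e1 + k)) ∧
    ((memAOn (openBox a b c d) c d u ∧ ∃ g, IsSobolev11On (openBox a b c d) u g) ↔
      (IntegrableOn u (openBox a b c d) ∧
        ∃ R ∈ SO2, ∃ γ : ℝ → ℝ, IntegrableOn γ (Ioo c d) ∧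
          IsSobolev11On (openBox a b c d) u fun x => R * (1 + γ (x 1) • outer e1 e2))) := by
  refine ⟨⟨fun ⟨hu, g, hg⟩ => ?_, fun ⟨hg, R, hR, θ, hθ, k, hu⟩ => ?_⟩,
    ⟨fun ⟨hu, g, hg⟩ => ?_, fun ⟨_, R, hR, γ, hγ, hg⟩ => ?_⟩⟩
  · obtain ⟨R, hR, γ, hγ, hRγ⟩ := hu.exists_isSobolev11On_mul_one_add_smul_outer hab hcd hg
    obtain ⟨θ, k, hθ, hu_eq⟩ := hRγ.exists_ae_eq_shear hab hcd hγ
    exact ⟨⟨g, hg⟩, R, hR, θ, isW11On_iff_exists_isPrimitiveOn.2 ⟨γ, hθ⟩, k, hu_eq⟩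
  · obtain ⟨γ, hγ⟩ := isW11On_iff_exists_isPrimitiveOn.1 hθ
    exact ⟨memAOn_of_ae_eq_shear hab hcd hR hγ hu, hg⟩
  · exact ⟨hg.int_u, hu.exists_isSobolev11On_mul_one_add_smul_outer hab hcd hg⟩
  · obtain ⟨θ, k, hθ, hu_eq⟩ := hg.exists_ae_eq_shear hab hcd hγ
    exact ⟨memAOn_of_ae_eq_shear hab hcd hR hθ hu_eq, _, hg⟩

end Characterization

/-- Remark 4.1(a): characterization of `A ∩ W^{1,1}(Ω;ℝ²)` on
`Ω = (0,1) × (−1,1)`: `A ∩ W^{1,1}` consists of the maps `u(x) = Rx + θ(x₂)Re₁ + c` with a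
constant `R ∈ SO(2)`, `θ ∈ W^{1,1}(−1,1)`, `c ∈ ℝ²`, and equivalently of the `W^{1,1}` maps
with `∇u(x) = R(I + γ(x₂)e₁⊗e₂)`, `R ∈ SO(2)`, `γ ∈ L¹(−1,1)`. -/
theorem charA_W11_Rect :
    ∀ u : V2 → V2,
      ((memAOn Rect (-1) 1 u ∧ ∃ g : V2 → Mat2, IsSobolev11On Rect u g) ↔
        ((∃ g : V2 → Mat2, IsSobolev11On Rect u g) ∧
          ∃ R ∈ SO2, ∃ θ : ℝ → ℝ, IsW11On θ (-1) 1 ∧ ∃ c : V2,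
            ∀ᵐ x ∂(volume.restrict Rect),
              u x = R.mulVec x + θ (x 1) • R.mulVec e1 + c)) ∧
      ((memAOn Rect (-1) 1 u ∧ ∃ g : V2 → Mat2, IsSobolev11On Rect u g) ↔
        (IntegrableOn u Rect volume ∧
          ∃ R ∈ SO2, ∃ γ : ℝ → ℝ, IntegrableOn γ (Ioo (-1:ℝ) 1) volume ∧
            IsSobolev11On Rect u fun x => R * (1 + γ (x 1) • outer e1 e2))) :=
  fun u => charA_W11_Rect_general (by norm_num) (by norm_num) u
end
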